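/- Let M₁, M₂ be positive integers and ℓ₁, ℓ₂ integers with 1 ≤ ℓ₁ ≤ M₁, 1 ≤ ℓ₂ ≤ M₂. For T ≥ 10 set y = T^{3/4}. Then for every ε > 0, |∫_{T/2}^T S₂(x) dx| ≪ T^{2−1/8+ε}, where the implied constant depends at most on M₁, M₂ and ε. -/

import Mathlib

open Real MeasureTheory Finset
open scoped Classical

noncomputable section

/-- The phase `h ℓ₂/M₂ + r ℓ₁/M₁ + 1/8` attached to a factorization pair `p = (h, r)`. -/
def phase (M₁ M₂ ℓ₁ ℓ₂ : ℕ) (p : ℕ × ℕ) : ℝ :=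
  ((p.1 : ℝ) * ℓ₂) / M₂ + ((p.2 : ℝ) * ℓ₁) / M₁ + 1/8

/-- `α(n, i) = √n₁ + (−1)^{i₁}√n₂ + (−1)^{i₂}√n₃ + (−1)^{i₃}√n₄`. -/
def alphaNI (n : ℕ × ℕ × ℕ × ℕ) (i : Fin 2 × Fin 2 × Fin 2) : ℝ :=
  Real.sqrt n.1 + (-1 : ℝ) ^ (i.1 : ℕ) * Real.sqrt n.2.1
    + (-1 : ℝ) ^ (i.2.1 : ℕ) * Real.sqrt n.2.2.1
    + (-1 : ℝ) ^ (i.2.2 : ℕ) * Real.sqrt n.2.2.2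

/-- `β(h, r, i)`, for the factorizations `n_j = h_j r_j` encoded as pairs `p_j`. -/
def betaSum (M₁ M₂ ℓ₁ ℓ₂ : ℕ) (i : Fin 2 × Fin 2 × Fin 2) (p₁ p₂ p₃ p₄ : ℕ × ℕ) : ℝ :=
  phase M₁ M₂ ℓ₁ ℓ₂ p₁ + (-1 : ℝ) ^ (i.1 : ℕ) * phase M₁ M₂ ℓ₁ ℓ₂ p₂
    + (-1 : ℝ) ^ (i.2.1 : ℕ) * phase M₁ M₂ ℓ₁ ℓ₂ p₃
    + (-1 : ℝ) ^ (i.2.2 : ℕ) * phase M₁ M₂ ℓ₁ ℓ₂ p₄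

/-- The "diagonal" part `S₁(x)` of `R₀(x;y)⁴`. -/
def S1 (M₁ M₂ ℓ₁ ℓ₂ : ℕ) (y x : ℝ) : ℝ :=
  x / (32 * π ^ 4) * ∑ i : Fin 2 × Fin 2 × Fin 2,
    ∑ n₁ ∈ Finset.Icc 1 ⌊y⌋₊, ∑ n₂ ∈ Finset.Icc 1 ⌊y⌋₊,
    ∑ n₃ ∈ Finset.Icc 1 ⌊y⌋₊, ∑ n₄ ∈ Finset.Icc 1 ⌊y⌋₊,
      if alphaNI (n₁, n₂, n₃, n₄) i = 0 then
        ((n₁ : ℝ) * n₂ * n₃ * n₄) ^ (-(3:ℝ)/4) *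
          ∑ p₁ ∈ Nat.divisorsAntidiagonal n₁, ∑ p₂ ∈ Nat.divisorsAntidiagonal n₂,
          ∑ p₃ ∈ Nat.divisorsAntidiagonal n₃, ∑ p₄ ∈ Nat.divisorsAntidiagonal n₄,
            Real.cos (2 * π * betaSum M₁ M₂ ℓ₁ ℓ₂ i p₁ p₂ p₃ p₄)
      else 0

/-- The "off-diagonal" part `S₂(x)` of `R₀(x;y)⁴`. -/
def S2 (M₁ M₂ ℓ₁ ℓ₂ : ℕ) (y x : ℝ) : ℝ :=
  x / (32 * π ^ 4) * ∑ i : Fin 2 × Fin 2 × Fin 2,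
    ∑ n₁ ∈ Finset.Icc 1 ⌊y⌋₊, ∑ n₂ ∈ Finset.Icc 1 ⌊y⌋₊,
    ∑ n₃ ∈ Finset.Icc 1 ⌊y⌋₊, ∑ n₄ ∈ Finset.Icc 1 ⌊y⌋₊,
      if alphaNI (n₁, n₂, n₃, n₄) i ≠ 0 then
        ((n₁ : ℝ) * n₂ * n₃ * n₄) ^ (-(3:ℝ)/4) *
          ∑ p₁ ∈ Nat.divisorsAntidiagonal n₁, ∑ p₂ ∈ Nat.divisorsAntidiagonal n₂,
          ∑ p₃ ∈ Nat.divisorsAntidiagonal n₃, ∑ p₄ ∈ Nat.divisorsAntidiagonal n₄,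
            Real.cos (4 * π * alphaNI (n₁, n₂, n₃, n₄) i * Real.sqrt x
              - 2 * π * betaSum M₁ M₂ ℓ₁ ℓ₂ i p₁ p₂ p₃ p₄)
      else 0


lemma aux_spaced {ι : Type*} (s : Finset ι) (f : ι → ℝ) (a L σ : ℝ) (hσ : 0 < σ)
    (h1 : ∀ x ∈ s, a ≤ f x ∧ f x ≤ a + L)
    (h2 : ∀ x ∈ s, ∀ y ∈ s, x ≠ y → σ ≤ |f x - f y|) (hL : 0 ≤ L) :
    (s.card : ℝ) ≤ L / σ + 1 := by
  have hmap : ∀ x ∈ s, (fun x => ⌊(f x - a) / σ⌋₊) x ∈ Finset.range (⌊L / σ⌋₊ + 1) := by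
    intro x hx
    simp only [Finset.mem_range]
    have := h1 x hx
    apply Nat.lt_succ_of_le
    apply Nat.floor_le_floor
    gcongr
    linarith
  have hinj : Set.InjOn (fun x => ⌊(f x - a) / σ⌋₊) (s : Set ι) := by
    intro x hx y hy hxy
    by_contra hne
    have h3 := h2 x hx y hy hne
    have hx1 := h1 x hx
    have hy1 := h1 y hy
    simp only at hxy
    have ax : 0 ≤ (f x - a) / σ := div_nonneg (by linarith) hσ.le
    have ay : 0 ≤ (f y - a) / σ := div_nonneg (by linarith) hσ.le
    have a1 := Nat.floor_le ax
    have a2 := Nat.lt_floor_add_one ((f x - a) / σ)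
    have b1 := Nat.floor_le ay
    have b2 := Nat.lt_floor_add_one ((f y - a) / σ)
    rw [hxy] at a1 a2
    have : |(f x - a) / σ - (f y - a) / σ| < 1 := by
      rw [abs_lt]; constructor <;> linarith
    rw [← sub_div, abs_div, abs_of_pos hσ, div_lt_one hσ] at this
    have e : f x - a - (f y - a) = f x - f y := by ring
    rw [e] at this
    linarith
  have := Finset.card_le_card_of_injOn _ hmap hinj
  rw [Finset.card_range] at this
  have h4 : (s.card : ℝ) ≤ (⌊L / σ⌋₊ : ℝ) + 1 := by exact_mod_cast this
  have h5 := Nat.floor_le (div_nonneg hL hσ.le)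
  linarith

lemma aux_fiber {ι κ : Type*} [DecidableEq κ] (s : Finset ι) (t : Finset κ) (f : ι → κ) (B : ℝ)
    (hf : ∀ x ∈ s, f x ∈ t) (hB : ∀ y ∈ t, ((s.filter (fun x => f x = y)).card : ℝ) ≤ B) :
    (s.card : ℝ) ≤ B * t.card := by
  rw [Finset.card_eq_sum_card_fiberwise (f := f) (t := t) (by intro x hx; exact hf x hx)]
  push_cast
  calc _ ≤ ∑ y ∈ t, B := Finset.sum_le_sum hB
    _ = _ := by simp [mul_comm]

/-- sum form of the divisor bound -/
lemma aux_log_le (ε : ℝ) (hε : 0 < ε) : ∃ C : ℝ, 1 ≤ C ∧ ∀ T : ℝ, 1 ≤ T → 1 + Real.log T ≤ C * T ^ ε := by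
  refine ⟨1 + 1/ε, by have : 0 < 1/ε := by positivity
                      linarith, ?_⟩
  intro T hT
  have h := Real.log_le_rpow_div (by linarith : (0:ℝ) ≤ T) hε
  have h1 : 1 ≤ T ^ ε := Real.one_le_rpow hT hε.le
  have : (1 + 1/ε) * T ^ ε = T^ε + T^ε/ε := by field_simp
  linarith

lemma aux_div (ε : ℝ) (hε : 0 < ε) : ∃ C : ℝ, 1 ≤ C ∧ ∀ n : ℕ, n ≠ 0 →
    (n.divisors.card : ℝ) ≤ C * (n : ℝ) ^ ε := by
  have hl2 : 0 < Real.log 2 := Real.log_pos (by norm_num)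
  set A : ℝ := 1 + 1 / (ε * Real.log 2) with hA
  have hA1 : 1 ≤ A := by
    have : 0 < 1 / (ε * Real.log 2) := by positivity
    linarith
  set P : ℕ := ⌈(2:ℝ) ^ (1/ε)⌉₊ with hP
  have key : ∀ p : ℕ, p.Prime → ∀ e : ℕ, ((e:ℝ) + 1) ≤ (if p < P then A else 1) * ((p:ℝ) ^ e) ^ ε := by
    intro p hp e
    have hp2 : (2:ℝ) ≤ p := by exact_mod_cast hp.two_le
    split_ifs with h
    · have h1 : ((2:ℝ) ^ e) ^ ε ≤ ((p:ℝ) ^ e) ^ ε := by gcongr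
      have h2 : 1 + e * ε * Real.log 2 ≤ ((2:ℝ) ^ e) ^ ε := by
        rw [← Real.rpow_natCast, ← Real.rpow_mul (by norm_num), Real.rpow_def_of_pos (by norm_num)]
        have := Real.add_one_le_exp (Real.log 2 * (e * ε))
        linarith
      have h3 : (e:ℝ) + 1 ≤ A * (1 + e * ε * Real.log 2) := by
        have : A * (1 + e * ε * Real.log 2) = 1 + e * ε * Real.log 2 + 1 / (ε * Real.log 2) + e := by
          rw [hA]; field_simp; ring
        rw [this]
        have : 0 < 1 / (ε * Real.log 2) := by positivity
        have : 0 ≤ e * ε * Real.log 2 := by positivity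
        linarith
      calc (e:ℝ) + 1 ≤ A * (1 + e * ε * Real.log 2) := h3
        _ ≤ A * ((p:ℝ) ^ e) ^ ε := by gcongr; linarith
    · rw [one_mul]
      push Not at h
      have h1 : (2:ℝ) ^ (1/ε) ≤ p := le_trans (Nat.le_ceil _) (by exact_mod_cast h)
      have h2 : (2:ℝ) ≤ (p:ℝ) ^ ε := by
        calc (2:ℝ) = ((2:ℝ) ^ (1/ε)) ^ ε := by
              rw [← Real.rpow_mul (by norm_num)]; field_simp; simp
          _ ≤ _ := by gcongr
      have h3 : ((p:ℝ) ^ e) ^ ε = ((p:ℝ) ^ ε) ^ e := by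
        rw [← Real.rpow_natCast, ← Real.rpow_natCast, ← Real.rpow_mul (by positivity), ← Real.rpow_mul (by positivity), mul_comm]
      rw [h3]
      calc (e:ℝ) + 1 ≤ (2:ℝ) ^ e := by exact_mod_cast Nat.lt_two_pow_self (n := e)
        _ ≤ _ := by gcongr
  refine ⟨A ^ P, one_le_pow₀ hA1, ?_⟩
  intro n hn
  rw [Nat.card_divisors hn]
  push_cast
  have h1 : ∏ x ∈ n.primeFactors, ((n.factorization x : ℝ) + 1) ≤
      ∏ x ∈ n.primeFactors, ((if x < P then A else 1) * ((x:ℝ) ^ (n.factorization x)) ^ ε) := by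
    apply Finset.prod_le_prod
    · intros; positivity
    · intro p hp; exact key p (Nat.prime_of_mem_primeFactors hp) _
  refine h1.trans ?_
  rw [Finset.prod_mul_distrib]
  have h2 : ∏ x ∈ n.primeFactors, ((x:ℝ) ^ (n.factorization x)) ^ ε = (n:ℝ) ^ ε := by
    rw [Real.finsetProd_rpow _ _ (by intros; positivity)]
    congr 1
    conv_rhs => rw [← Nat.prod_factorization_pow_eq_self hn]
    rw [Finsupp.prod]; push_cast; rfl
  rw [h2]
  gcongr
  rw [Finset.prod_ite, Finset.prod_const_one, mul_one, Finset.prod_const]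
  apply pow_le_pow_right₀ hA1
  calc _ ≤ (Finset.range P).card := by
        apply Finset.card_le_card
        intro x hx; simp at hx ⊢; exact hx.2
    _ = P := by simp

lemma aux_cong_dvd (m k1 x y : ℕ) (hm : 0 < m) (e : ℤ) (hk : Nat.Coprime k1 m)
    (h1 : ((m:ℤ)^2 ∣ (k1:ℤ)^2 - e)) (hx : ((m:ℤ)^2 ∣ (x:ℤ)^2 - e)) (hy : ((m:ℤ)^2 ∣ (y:ℤ)^2 - e))
    (hxy : Int.gcd ((x:ℤ) - k1) ((m:ℤ)^2) = Int.gcd ((y:ℤ) - k1) ((m:ℤ)^2)) :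
    ((m:ℤ)^2) ∣ 2 * ((x:ℤ) - y) := by
  have hq0 : ((m:ℤ)^2) ≠ 0 := by positivity
  generalize hq : (m:ℤ)^2 = q at *
  have step : ∀ z : ℕ, q ∣ (z:ℤ)^2 - e → q ∣ (Int.gcd ((z:ℤ) - k1) q : ℤ) * ((z:ℤ) + k1) := by
    intro z hz
    rw [Int.gcd_eq_gcd_ab]
    have h2 : q ∣ ((z:ℤ) - k1) * ((z:ℤ) + k1) := by
      have := dvd_sub hz h1
      rwa [show (z:ℤ)^2 - e - ((k1:ℤ)^2 - e) = ((z:ℤ) - k1) * ((z:ℤ) + k1) by ring] at this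
    have : ((((z:ℤ) - k1) * Int.gcdA (↑z - ↑k1) q + q * Int.gcdB (↑z - ↑k1) q) * (↑z + ↑k1)) =
      (((z:ℤ) - k1) * ((z:ℤ) + k1)) * Int.gcdA (↑z - ↑k1) q + q * (Int.gcdB (↑z - ↑k1) q * (↑z + ↑k1)) := by ring
    rw [this]
    exact dvd_add (Dvd.dvd.mul_right h2 _) (Dvd.intro _ rfl)
  have hvx := step x hx
  have hvy := step y hy
  have dx : (Int.gcd ((x:ℤ) - k1) q : ℤ) ∣ (x:ℤ) - k1 := Int.gcd_dvd_left ..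
  have dy : (Int.gcd ((y:ℤ) - k1) q : ℤ) ∣ (y:ℤ) - k1 := Int.gcd_dvd_left ..
  have dq : (Int.gcd ((x:ℤ) - k1) q : ℤ) ∣ q := Int.gcd_dvd_right ..
  rw [← hxy] at hvy dy
  generalize hd : (Int.gcd ((x:ℤ) - k1) q : ℤ) = d at *
  obtain ⟨q', rfl⟩ := dq
  have hd0 : d ≠ 0 := by rintro rfl; simp at hq0
  have ex : q' ∣ (x:ℤ) + k1 := Int.dvd_of_mul_dvd_mul_left hd0 hvx
  have ey : q' ∣ (y:ℤ) + k1 := Int.dvd_of_mul_dvd_mul_left hd0 hvy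
  have w1 : d ∣ (x:ℤ) - y := by
    have := dvd_sub dx dy
    rwa [show (x:ℤ) - k1 - ((y:ℤ) - k1) = x - y by ring] at this
  have w2 : q' ∣ (x:ℤ) - y := by
    have := dvd_sub ex ey
    rwa [show (x:ℤ) + k1 - ((y:ℤ) + k1) = x - y by ring] at this
  have g2 : (Int.gcd d q' : ℤ) ∣ 2 := by
    have ga : (Int.gcd d q' : ℤ) ∣ d := Int.gcd_dvd_left ..
    have gb : (Int.gcd d q' : ℤ) ∣ q' := Int.gcd_dvd_right ..
    have gk : (Int.gcd d q' : ℤ) ∣ 2 * k1 := by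
      have := dvd_sub (gb.trans ex) (ga.trans dx)
      rwa [show (x:ℤ) + k1 - ((x:ℤ) - k1) = 2 * k1 by ring] at this
    have gm : (Int.gcd d q' : ℤ) ∣ (m:ℤ)^2 := by rw [hq]; exact ga.mul_right _
    have cop : IsCoprime ((m:ℤ)^2) (k1:ℤ) := by
      apply IsCoprime.pow_left
      exact (Nat.isCoprime_iff_coprime.mpr hk).symm
    exact (cop.of_isCoprime_of_dvd_left gm).dvd_of_dvd_mul_right gk
  have g3 : d * q' ∣ (Int.gcd d q' : ℤ) * ((x:ℤ) - y) := by
    rw [Int.gcd_eq_gcd_ab, add_mul]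
    apply dvd_add
    · rw [mul_assoc]; exact mul_dvd_mul_left _ (w2.mul_left _)
    · have : q' * Int.gcdB d q' * ((x:ℤ) - y) = ((x:ℤ) - y) * q' * Int.gcdB d q' := by ring
      rw [this]
      exact (mul_dvd_mul_right w1 _).mul_right _
  exact g3.trans (mul_dvd_mul_right g2 _)

lemma aux_cong (m : ℕ) (hm : 0 < m) (e : ℤ) (R : ℝ) (hR : 0 ≤ R) (S : Finset ℕ)
    (hS : ∀ k ∈ S, (k:ℝ) ≤ R ∧ Nat.Coprime k m ∧ ((m:ℤ)^2 ∣ (k:ℤ)^2 - e)) :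
    (S.card : ℝ) ≤ (2 * R / (m:ℝ)^2 + 1) * ((m^2).divisors.card : ℝ) := by
  rcases S.eq_empty_or_nonempty with rfl | ⟨k1, hk1⟩
  · simp; positivity
  have hm2 : (0:ℝ) < (m:ℝ)^2 := by positivity
  apply aux_fiber S (m^2).divisors (fun k => Int.gcd ((k:ℤ) - k1) ((m:ℤ)^2))
  · intro k hk
    rw [Nat.mem_divisors]
    refine ⟨?_, by positivity⟩
    have : (Int.gcd ((k:ℤ) - k1) ((m:ℤ)^2) : ℤ) ∣ (m:ℤ)^2 := Int.gcd_dvd_right ..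
    exact_mod_cast this
  · intro d _
    have := aux_spaced (S.filter (fun k : ℕ => Int.gcd ((k:ℤ) - k1) ((m:ℤ)^2) = d)) (fun k : ℕ => (k:ℝ)) 0 R
      ((m:ℝ)^2 / 2) (by positivity) ?_ ?_ hR
    · refine this.trans (le_of_eq ?_)
      field_simp
    · intro x hx
      simp only [Finset.mem_filter] at hx
      exact ⟨by positivity, by simpa using (hS x hx.1).1⟩
    · intro x hx y hy hne
      simp only [Finset.mem_filter] at hx hy
      have hd := aux_cong_dvd m k1 x y hm e (hS k1 hk1).2.1 (hS k1 hk1).2.2 (hS x hx.1).2.2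
        (hS y hy.1).2.2 (by rw [hx.2, hy.2])
      have hne' : 2 * ((x:ℤ) - y) ≠ 0 := by
        intro h; apply hne; omega
      have := Int.le_of_dvd (abs_pos.mpr hne') ((dvd_abs _ _).mpr hd)
      have h2 : ((m:ℝ)^2) ≤ |2 * ((x:ℝ) - y)| := by exact_mod_cast this
      rw [abs_mul, abs_two] at h2
      linarith

/-- near-Pell triples `(m,k,b)` -/
def ZP (M B : ℕ) (θ : ℝ) (x : ℕ × ℕ × ℕ) : Prop :=
  M ≤ x.1 ∧ x.1 < 2 * M ∧ B ≤ x.2.2 ∧ x.2.2 < 4 * B ∧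
  |(x.2.1 : ℝ) - 4 * x.1 * √(x.2.2)| ≤ θ ∧ ((x.2.1 : ℤ)^2 - 16 * (x.1 : ℤ)^2 * x.2.2 ≠ 0)

lemma aux_ZC (M B j : ℕ) (hM : 0 < M) (hj : 0 < j) (θ : ℝ) (hθ : 0 < θ)
    (Z : Finset (ℕ × ℕ × ℕ)) (hZ : ∀ x ∈ Z, ZP M B θ x ∧ Nat.gcd x.1 x.2.1 = j) :
    (Z.card : ℝ) ≤ 3 * B + 24 * (B * θ * M) / j^2 := by
  have hM' : (0:ℝ) < M := by exact_mod_cast hM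
  have hj' : (0:ℝ) < j := by exact_mod_cast hj
  have key : (Z.card : ℝ) ≤ ((2 * θ / M) / ((j:ℝ)^2 / (4 * (M:ℝ)^2)) + 1) * ((Finset.Ico B (4*B)).card : ℝ) := by
    apply aux_fiber Z (Finset.Ico B (4*B)) (fun x => x.2.2)
    · intro x hx
      have := (hZ x hx).1
      simp [this.2.2.1, this.2.2.2.1]
    · intro b hb
      apply aux_spaced _ (fun x => (x.2.1 : ℝ) / x.1) (4 * √b - θ / M)
      · positivity
      · intro x hx
        simp only [Finset.mem_filter] at hx
        obtain ⟨hx1, hxb⟩ := hx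
        obtain ⟨⟨h1, h2, h3, h4, h5, h6⟩, h7⟩ := hZ x hx1
        rw [hxb] at h5
        have hm : (0:ℝ) < x.1 := by exact_mod_cast lt_of_lt_of_le hM h1
        have hmM : (M:ℝ) ≤ x.1 := by exact_mod_cast h1
        have e : (x.2.1 : ℝ) / x.1 - 4 * √b = (x.2.1 - 4 * x.1 * √b) / x.1 := by field_simp
        have h8 : |(x.2.1 : ℝ) / x.1 - 4 * √b| ≤ θ / M := by
          rw [e, abs_div, abs_of_pos hm]
          gcongr
        rw [abs_le] at h8
        constructor
        · linarith [h8.1]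
        · have : 4 * √b - θ / M + 2 * θ / M = 4 * √b + θ / M := by ring
          rw [this]; linarith [h8.2]
      · intro x hx y hy hne
        simp only [Finset.mem_filter] at hx hy
        obtain ⟨hx1, hxb⟩ := hx
        obtain ⟨hy1, hyb⟩ := hy
        obtain ⟨⟨h1, h2, -, -, -, -⟩, h7⟩ := hZ x hx1
        obtain ⟨⟨g1, g2, -, -, -, -⟩, g7⟩ := hZ y hy1
        obtain ⟨m, k, b1⟩ := x
        obtain ⟨m', k', b2⟩ := y
        simp only at *
        subst hxb
        subst hyb
        have hm : (0:ℝ) < m := by exact_mod_cast lt_of_lt_of_le hM h1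
        have hm' : (0:ℝ) < m' := by exact_mod_cast lt_of_lt_of_le hM g1
        obtain ⟨m0, hm0⟩ : j ∣ m := h7 ▸ Nat.gcd_dvd_left m k
        obtain ⟨k0, hk0⟩ : j ∣ k := h7 ▸ Nat.gcd_dvd_right m k
        obtain ⟨m0', hm0'⟩ : j ∣ m' := g7 ▸ Nat.gcd_dvd_left m' k'
        obtain ⟨k0', hk0'⟩ : j ∣ k' := g7 ▸ Nat.gcd_dvd_right m' k'
        subst hm0 hk0 hm0' hk0'
        have c1 : Nat.Coprime m0 k0 := by
          rw [Nat.gcd_mul_left] at h7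
          have : j * Nat.gcd m0 k0 = j * 1 := by omega
          exact Nat.eq_of_mul_eq_mul_left hj this
        have c2 : Nat.Coprime m0' k0' := by
          rw [Nat.gcd_mul_left] at g7
          have : j * Nat.gcd m0' k0' = j * 1 := by omega
          exact Nat.eq_of_mul_eq_mul_left hj this
        have hne2 : (k0:ℤ) * m0' - k0' * m0 ≠ 0 := by
          intro h0
          apply hne
          have h00 : k0 * m0' = k0' * m0 := by
            have : (k0:ℤ) * m0' = k0' * m0 := by linarith
            exact_mod_cast this
          have d1 : m0 ∣ m0' := c1.dvd_of_dvd_mul_left (Dvd.intro_left k0' h00.symm)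
          have d2 : m0' ∣ m0 := c2.dvd_of_dvd_mul_left (Dvd.intro_left k0 h00)
          have e1 := Nat.dvd_antisymm d1 d2
          subst e1
          have : 0 < m0 := by
            rcases Nat.eq_zero_or_pos m0 with h | h
            · subst h; simp at hm
            · exact h
          have e2 := Nat.eq_of_mul_eq_mul_right this h00
          rw [e2]
        have h1' : (1:ℝ) ≤ |(k0:ℝ) * m0' - k0' * m0| := by
          have := Int.one_le_abs hne2
          exact_mod_cast this
        push_cast at hm hm' ⊢
        have e : (j:ℝ) * k0 / (j * m0) - j * k0' / (j * m0') = j^2 * (k0 * m0' - k0' * m0) / ((j * m0) * (j * m0')) := by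
          have : (m0:ℝ) ≠ 0 := by rintro h; rw [h] at hm; simp at hm
          have : (m0':ℝ) ≠ 0 := by rintro h; rw [h] at hm'; simp at hm'
          field_simp
        rw [e, abs_div, abs_mul, abs_of_pos (mul_pos hm hm'), abs_of_pos (by positivity : (0:ℝ) < (j:ℝ)^2)]
        have hb1 : (j:ℝ) * m0 ≤ 2 * M := by exact_mod_cast h2.le
        have hb2 : (j:ℝ) * m0' ≤ 2 * M := by exact_mod_cast g2.le
        have hb3 : (j:ℝ) * m0 * (j * m0') ≤ 4 * (M:ℝ)^2 := by
          calc (j:ℝ) * m0 * (j * m0') ≤ 2 * M * (2 * M) := by gcongr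
            _ = _ := by ring
        have hb4 : 0 < (j:ℝ) * m0 * (j * m0') := mul_pos hm hm'
        rw [div_le_div_iff₀ (by positivity) hb4]
        have : (0:ℝ) < (j:ℝ)^2 := by positivity
        calc (j:ℝ)^2 * (j * m0 * (j * m0')) ≤ (j:ℝ)^2 * (4 * (M:ℝ)^2) := by gcongr
          _ = (j:ℝ)^2 * 1 * (4 * (M:ℝ)^2) := by ring
          _ ≤ _ := by gcongr
      · positivity
  refine key.trans (le_of_eq ?_)
  rw [Nat.card_Ico]
  have : ((4 * B - B : ℕ) : ℝ) = 3 * B := by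
    have : 4 * B - B = 3 * B := by omega
    rw [this]; push_cast; ring
  rw [this]
  field_simp
  ring

lemma aux_ZA (M B j : ℕ) (hM : 0 < M) (hB : 0 < B) (hj : 0 < j) (θ D : ℝ) (hθ : 0 < θ) (hθ1 : θ ≤ 1)
    (hD : ∀ m : ℕ, 0 < m → m < 2 * M → ((m^2).divisors.card : ℝ) ≤ D)
    (Z : Finset (ℕ × ℕ × ℕ)) (hZ : ∀ x ∈ Z, ZP M B θ x ∧ Nat.gcd x.1 x.2.1 = j) :
    (Z.card : ℝ) ≤ (18 * √B * j / M + 1) * D * ((2 * M / j) * (2 * (36 * θ * M * √B) / j^2)) := by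
  have hM' : (0:ℝ) < M := by exact_mod_cast hM
  have hj' : (0:ℝ) < j := by exact_mod_cast hj
  have hB' : (1:ℝ) ≤ B := by exact_mod_cast hB
  have hsB : (1:ℝ) ≤ √B := Real.one_le_sqrt.mpr hB'
  have hD0 : 0 ≤ D := le_trans (by positivity) (hD 1 (by norm_num) (by omega))
  set K : ℝ := 36 * θ * M * √B with hK
  have hK0 : 0 < K := by positivity
  set t : Finset (ℕ × ℤ) := (Finset.Icc 1 ⌊2 * (M:ℝ) / j⌋₊) ×ˢ
    ((Finset.Icc (-(⌊K / j^2⌋₊ : ℤ)) (⌊K / j^2⌋₊ : ℤ)).erase 0) with ht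
  have htcard : (t.card : ℝ) ≤ (2 * M / j) * (2 * K / j^2) := by
    rw [ht, Finset.card_product]
    push_cast
    have h1 : ((Finset.Icc 1 ⌊2 * (M:ℝ) / j⌋₊).card : ℝ) ≤ 2 * M / j := by
      rw [Nat.card_Icc]
      simp only [Nat.add_sub_cancel]
      exact Nat.floor_le (by positivity)
    have h2 : (((Finset.Icc (-(⌊K / j^2⌋₊ : ℤ)) (⌊K / j^2⌋₊ : ℤ)).erase 0).card : ℝ) ≤ 2 * K / j^2 := by
      rw [Finset.card_erase_of_mem (by simp), Int.card_Icc]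
      have e : ((⌊K / (j:ℝ)^2⌋₊ : ℤ) + 1 - -(⌊K / (j:ℝ)^2⌋₊ : ℤ)).toNat - 1 = 2 * ⌊K / (j:ℝ)^2⌋₊ := by omega
      rw [e]; push_cast
      have := Nat.floor_le (by positivity : 0 ≤ K / (j:ℝ)^2)
      calc 2 * (⌊K / (j:ℝ)^2⌋₊ : ℝ) ≤ 2 * (K / j^2) := by gcongr
        _ = _ := by ring
    gcongr
  have fact : ∀ x ∈ Z, ∃ m0 k0 : ℕ, x.1 = j * m0 ∧ x.2.1 = j * k0 ∧ 0 < m0 ∧ Nat.Coprime k0 m0 ∧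
      (M:ℝ) ≤ j * m0 ∧ (j:ℝ) * m0 ≤ 2 * M ∧ (k0:ℝ) ≤ 9 * m0 * √B ∧
      ((k0:ℤ)^2 - 16 * (m0:ℤ)^2 * x.2.2) ≠ 0 ∧ |((((k0:ℤ)^2 - 16 * (m0:ℤ)^2 * x.2.2) : ℤ) : ℝ)| ≤ K / j^2 ∧ m0 < 2 * M := by
    intro x hx
    obtain ⟨⟨h1, h2, h3, h4, h5, h6⟩, h7⟩ := hZ x hx
    obtain ⟨m, k, b⟩ := x
    simp only at *
    obtain ⟨m0, hm0⟩ : j ∣ m := h7 ▸ Nat.gcd_dvd_left m k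
    obtain ⟨k0, hk0⟩ : j ∣ k := h7 ▸ Nat.gcd_dvd_right m k
    subst hm0 hk0
    have hm0p : 0 < m0 := by
      rcases Nat.eq_zero_or_pos m0 with h | h
      · subst h; simp at h1; omega
      · exact h
    have hm0' : (1:ℝ) ≤ m0 := by exact_mod_cast hm0p
    have hj1 : (1:ℝ) ≤ j := by exact_mod_cast hj
    have c1 : Nat.Coprime m0 k0 := by
      rw [Nat.gcd_mul_left] at h7
      have : j * Nat.gcd m0 k0 = j * 1 := by omega
      exact Nat.eq_of_mul_eq_mul_left hj this
    have hsb : √(b:ℝ) ≤ 2 * √B := by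
      rw [show 2 * √(B:ℝ) = √(4 * B) by
        rw [Real.sqrt_mul (by norm_num), show (4:ℝ) = 2^2 by norm_num, Real.sqrt_sq (by norm_num)]]
      apply Real.sqrt_le_sqrt
      exact_mod_cast h4.le
    have hsb0 : 0 ≤ √(b:ℝ) := Real.sqrt_nonneg _
    push_cast at h5
    have h5' := abs_le.mp h5
    have hJM : (j:ℝ) * m0 ≤ 2 * M := by exact_mod_cast h2.le
    have hb1 : (1:ℝ) ≤ √(b:ℝ) := Real.one_le_sqrt.mpr (by exact_mod_cast le_trans hB h3)
    refine ⟨m0, k0, rfl, rfl, hm0p, c1.symm, by exact_mod_cast h1, hJM, ?_, ?_, ?_, ?_⟩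
    · have a1 : (j:ℝ) * k0 ≤ j * (9 * m0 * √B) := by
        have : (j:ℝ) * k0 ≤ 4 * (j * m0) * √b + 1 := by linarith [h5'.2]
        have b1 : 4 * ((j:ℝ) * m0) * √b ≤ 4 * (j * m0) * (2 * √B) := by gcongr
        have b2 : (1:ℝ) ≤ j * m0 * √B := by
          calc (1:ℝ) = 1 * 1 * 1 := by norm_num
            _ ≤ _ := by gcongr
        nlinarith
      exact le_of_mul_le_mul_left a1 hj'
    · intro h0; apply h6
      push_cast
      linear_combination (j:ℤ)^2 * h0
    · rw [le_div_iff₀ (by positivity)]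
      push_cast
      have e1 : |(k0:ℝ)^2 - 16 * (m0:ℝ)^2 * b| * j^2 = |(j * k0 - 4 * (j * m0) * √b) * (j * k0 + 4 * (j * m0) * √b)| := by
        have : (0:ℝ) ≤ (j:ℝ)^2 := by positivity
        rw [← abs_of_nonneg this, ← abs_mul]
        congr 1
        have hs := Real.sq_sqrt (Nat.cast_nonneg b : (0:ℝ) ≤ b)
        linear_combination (16 * (j:ℝ)^2 * m0^2) * hs
      rw [e1, abs_mul, abs_of_nonneg (by positivity : (0:ℝ) ≤ j * k0 + 4 * (j * m0) * √b)]
      have b2 : (1:ℝ) ≤ j * m0 * √b := by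
          calc (1:ℝ) = 1 * 1 * 1 := by norm_num
            _ ≤ _ := by gcongr
      have b3 : (j:ℝ) * k0 + 4 * (j * m0) * √b ≤ 9 * (j * m0 * √b) := by linarith [h5'.2]
      have b4 : (j:ℝ) * m0 * √b ≤ 2 * M * (2 * √B) := by gcongr
      calc _ ≤ θ * (9 * (2 * M * (2 * √B))) := by
            gcongr; linarith
        _ = K := by rw [hK]; ring
    · nlinarith
  have key : (Z.card : ℝ) ≤ ((18 * √B * j / M + 1) * D) * (t.card : ℝ) := by
    apply aux_fiber Z t (fun x => (x.1 / j, ((x.2.1 / j : ℕ) : ℤ)^2 - 16 * ((x.1 / j : ℕ) : ℤ)^2 * x.2.2))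
    · intro x hx
      obtain ⟨m0, k0, e1, e2, p0, cop, q1, q2, q3, q4, q5, q6⟩ := fact x hx
      rw [e1, e2, Nat.mul_div_cancel_left _ hj, Nat.mul_div_cancel_left _ hj]
      rw [ht, Finset.mem_product]
      constructor
      · simp only [Finset.mem_Icc]
        refine ⟨p0, Nat.le_floor ?_⟩
        rw [le_div_iff₀ hj']; linarith
      · simp only [Finset.mem_erase, Finset.mem_Icc]
        refine ⟨q4, ?_⟩
        rw [← abs_le]
        have : (((k0:ℤ)^2 - 16 * (m0:ℤ)^2 * x.2.2).natAbs : ℝ) ≤ K / j^2 := by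
          rw [Nat.cast_natAbs]; rw [Int.cast_abs]; exact q5
        have := Nat.le_floor this
        rw [Int.abs_eq_natAbs]; exact_mod_cast this
    · rintro ⟨m0, e0⟩ hy
      have hm0 : 0 < m0 := by
        rw [ht, Finset.mem_product] at hy
        have := hy.1
        simp only [Finset.mem_Icc] at this
        exact this.1
      set F := Z.filter (fun x => (x.1 / j, ((x.2.1 / j : ℕ) : ℤ)^2 - 16 * ((x.1 / j : ℕ) : ℤ)^2 * x.2.2) = (m0, e0)) with hF
      have factF : ∀ x ∈ F, ∃ k0 : ℕ, x.1 = j * m0 ∧ x.2.1 = j * k0 ∧ Nat.Coprime k0 m0 ∧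
          (M:ℝ) ≤ j * m0 ∧ (k0:ℝ) ≤ 9 * m0 * √B ∧ ((k0:ℤ)^2 - 16 * (m0:ℤ)^2 * x.2.2) = e0 ∧ m0 < 2 * M := by
        intro x hx
        rw [hF, Finset.mem_filter] at hx
        obtain ⟨m1, k0, e1, e2, p0, cop, q1, q2, q3, q4, q5, q6⟩ := fact x hx.1
        have := hx.2
        rw [e1, e2, Nat.mul_div_cancel_left _ hj, Nat.mul_div_cancel_left _ hj] at this
        simp only [Prod.mk.injEq] at this
        obtain ⟨t1, t2⟩ := this
        subst t1
        exact ⟨k0, e1, e2, cop, q1, q3, t2, q6⟩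
      rcases F.eq_empty_or_nonempty with hE | ⟨x0, hx0⟩
      · rw [hE]; simp; positivity
      obtain ⟨_, _, _, _, hMm, _, _, hm2⟩ := factF x0 hx0
      have inj : Set.InjOn (fun x : ℕ × ℕ × ℕ => x.2.1 / j) (F : Set (ℕ × ℕ × ℕ)) := by
        intro x hx y hy hxy
        obtain ⟨k0, a1, a2, a3, a4, a5, a6, a7⟩ := factF x hx
        obtain ⟨k0', b1, b2, b3, b4, b5, b6, b7⟩ := factF y hy
        simp only at hxy
        rw [a2, b2, Nat.mul_div_cancel_left _ hj, Nat.mul_div_cancel_left _ hj] at hxy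
        subst hxy
        have e3 : (x.2.2 : ℤ) = y.2.2 := by
          have h16 : (16 * (m0:ℤ)^2) ≠ 0 := by positivity
          apply mul_left_cancel₀ h16
          linarith
        ext
        · rw [a1, b1]
        · rw [a2, b2]
        · exact_mod_cast e3
      rw [← Finset.card_image_of_injOn inj]
      have hm0' : (0:ℝ) < m0 := by exact_mod_cast hm0
      have := aux_cong m0 hm0 e0 (9 * m0 * √B) (by positivity) (F.image (fun x : ℕ × ℕ × ℕ => x.2.1 / j)) ?_
      · refine this.trans ?_
        have c1 : 2 * (9 * (m0:ℝ) * √B) / (m0:ℝ)^2 ≤ 18 * √B * j / M := by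
          rw [div_le_div_iff₀ (by positivity) (by positivity)]
          calc 2 * (9 * (m0:ℝ) * √B) * M ≤ 2 * (9 * (m0:ℝ) * √B) * (j * m0) := by gcongr
            _ = _ := by ring
        have c2 := hD m0 hm0 hm2
        gcongr
      · intro k hk
        rw [Finset.mem_image] at hk
        obtain ⟨x, hx, rfl⟩ := hk
        obtain ⟨k0, a1, a2, a3, a4, a5, a6, a7⟩ := factF x hx
        rw [a2, Nat.mul_div_cancel_left _ hj]
        refine ⟨a5, a3, ⟨16 * x.2.2, ?_⟩⟩
        rw [← a6]; ring
  refine key.trans ?_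
  gcongr

lemma aux_Zj (M B j : ℕ) (hM : 0 < M) (hB : 0 < B) (hj : 0 < j) (θ D : ℝ) (hθ : 0 < θ) (hθ1 : θ ≤ 1)
    (hD : ∀ m : ℕ, 0 < m → m < 2 * M → ((m^2).divisors.card : ℝ) ≤ D)
    (Z : Finset (ℕ × ℕ × ℕ)) (hZ : ∀ x ∈ Z, ZP M B θ x ∧ Nat.gcd x.1 x.2.1 = j) :
    (Z.card : ℝ) ≤ D * (2616 * θ * M * B + 21 * √θ * M * (B:ℝ)^((3:ℝ)/4)) * (j:ℝ)⁻¹ := by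
  have hM' : (0:ℝ) < M := by exact_mod_cast hM
  have hj' : (0:ℝ) < j := by exact_mod_cast hj
  have hj1 : (1:ℝ) ≤ j := by exact_mod_cast hj
  have hB' : (0:ℝ) < B := by exact_mod_cast hB
  have hD1 : 1 ≤ D := by
    refine le_trans ?_ (hD 1 (by norm_num) (by omega))
    simp
  have h1 := aux_ZC M B j hM hj θ hθ Z hZ
  have h2 := aux_ZA M B j hM hB hj θ D hθ hθ1 hD Z hZ
  set r := 21 * D * √θ * M * (B:ℝ)^((3:ℝ)/4) with hr
  have hr0 : 0 < r := by have := Real.sqrt_pos.mpr hθ; positivity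
  have hsq : (√θ)^2 = θ := Real.sq_sqrt hθ.le
  have hBB : ((B:ℝ)^((3:ℝ)/4))^2 = B * √B := by
    rw [← Real.rpow_natCast, ← Real.rpow_mul hB'.le, Real.sqrt_eq_rpow]
    nth_rewrite 2 [← Real.rpow_one (B:ℝ)]
    rw [← Real.rpow_add hB']; norm_num
  have hsB := Real.sq_sqrt hB'.le
  have hr2 : 3 * B * (144 * D * θ * M^2 * √B) ≤ r^2 := by
    have : r^2 = 441 * D^2 * θ * M^2 * (B * √B) := by
      rw [← hBB]
      linear_combination (441 * D^2 * (M:ℝ)^2 * ((B:ℝ)^((3:ℝ)/4))^2) * hsq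
    rw [this]
    have h3 : D ≤ D^2 := by nlinarith
    have : 0 ≤ θ * M^2 * (B * √B) := by positivity
    nlinarith [mul_le_mul_of_nonneg_right h3 this, mul_nonneg (by linarith : (0:ℝ) ≤ D) this]
  have h2' : (Z.card : ℝ) ≤ 2592 * D * θ * M * B / j^2 + (144 * D * θ * M^2 * √B) / j^3 := by
    refine h2.trans (le_of_eq ?_)
    field_simp
    linear_combination (2592 : ℝ) * (j:ℝ) * hsB
  have b1 : 24 * (B * θ * M) / (j:ℝ)^2 ≤ 24 * (D * (B * θ * M)) / j := by
    have : (B * θ * M) ≤ D * (B * θ * M) := le_mul_of_one_le_left (by positivity) hD1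
    gcongr
    nlinarith
  have b2 : 2592 * D * θ * M * B / (j:ℝ)^2 ≤ 2592 * D * θ * M * B / j := by
    gcongr
    nlinarith
  have e : D * (2616 * θ * M * B + 21 * √θ * M * (B:ℝ)^((3:ℝ)/4)) * (j:ℝ)⁻¹ = 24 * (D * (B * θ * M)) / j + 2592 * D * θ * M * B / j + r / j := by
    rw [hr]; field_simp; ring
  rw [e]
  have p1 : 0 ≤ 24 * (D * (B * θ * M)) / j := by positivity
  have p2 : 0 ≤ 2592 * D * θ * M * B / j := by positivity
  by_cases hc : (3:ℝ) * B ≤ r / j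
  · linarith
  · push Not at hc
    rw [div_lt_iff₀ hj'] at hc
    have : (144 * D * θ * M^2 * √B) / (j:ℝ)^3 ≤ r / j := by
      have h4 : 144 * D * θ * M^2 * √B ≤ r * j := by
        have : 3 * (B:ℝ) * (144 * D * θ * M^2 * √B) ≤ 3 * B * (r * j) := by nlinarith
        exact le_of_mul_le_mul_left this (by positivity)
      rw [div_le_div_iff₀ (by positivity) hj']
      calc _ ≤ r * j * j := by gcongr
        _ ≤ r * j^3 := by
          rw [mul_assoc]; gcongr; nlinarith [mul_pos hj' hj']
    linarith

lemma aux_Z (M B : ℕ) (hM : 0 < M) (hB : 0 < B) (θ D : ℝ) (hθ : 0 < θ) (hθ1 : θ ≤ 1)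
    (hD : ∀ m : ℕ, 0 < m → m < 2 * M → ((m^2).divisors.card : ℝ) ≤ D)
    (Z : Finset (ℕ × ℕ × ℕ)) (hZ : ∀ x ∈ Z, ZP M B θ x) :
    (Z.card : ℝ) ≤ D * (2616 * θ * M * B + 21 * √θ * M * (B:ℝ)^((3:ℝ)/4)) * (1 + Real.log (2 * M)) := by
  have hD1 : 1 ≤ D := by
    refine le_trans ?_ (hD 1 (by norm_num) (by omega))
    simp
  have h : Z.card = ∑ j ∈ Finset.Icc 1 (2*M), (Z.filter (fun x => Nat.gcd x.1 x.2.1 = j)).card := by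
    apply Finset.card_eq_sum_card_fiberwise
    intro x hx
    have := hZ x hx
    have h1 : 0 < x.1 := lt_of_lt_of_le hM this.1
    simp only [Finset.coe_Icc, Set.mem_Icc]
    exact ⟨Nat.gcd_pos_of_pos_left _ h1, (Nat.gcd_le_left _ h1).trans this.2.1.le⟩
  rw [h]; push_cast
  calc _ ≤ ∑ j ∈ Finset.Icc 1 (2*M), D * (2616 * θ * M * B + 21 * √θ * M * (B:ℝ)^((3:ℝ)/4)) * (j:ℝ)⁻¹ := by
        apply Finset.sum_le_sum
        intro j hj
        apply aux_Zj M B j hM hB (Finset.mem_Icc.mp hj).1 θ D hθ hθ1 hD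
        intro x hx
        rw [Finset.mem_filter] at hx
        exact ⟨hZ x hx.1, hx.2⟩
    _ = D * (2616 * θ * M * B + 21 * √θ * M * (B:ℝ)^((3:ℝ)/4)) * ((harmonic (2*M) : ℚ) : ℝ) := by
        rw [harmonic_eq_sum_Icc, ← Finset.mul_sum]; push_cast; rfl
    _ ≤ _ := by
        gcongr
        have := harmonic_le_one_add_log (2*M)
        push_cast at this
        exact this

/-- the linear form in four square roots -/
def al (s1 s2 s3 s4 : ℤ) (x : ℕ × ℕ × ℕ × ℕ) : ℝ :=
  s1 * √x.1 + s2 * √x.2.1 + s3 * √x.2.2.1 + s4 * √x.2.2.2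

def mI (x : ℕ × ℕ × ℕ × ℕ) : ℤ := (x.1 : ℤ) + x.2.1 - x.2.2.1 - x.2.2.2
def kI (x : ℕ × ℕ × ℕ × ℕ) : ℤ := 4 * (x.1 : ℤ) * x.2.1 - 4 * x.2.2.1 * x.2.2.2 - (mI x)^2

lemma aux_sgn (s : ℤ) (h : s = 1 ∨ s = -1) : (s:ℝ)^2 = 1 ∧ |(s:ℝ)| = 1 := by
  rcases h with rfl | rfl <;> norm_num

set_option maxHeartbeats 1000000 in
lemma aux_key (s1 s2 s3 s4 : ℤ) (h1 : s1 = 1 ∨ s1 = -1) (h2 : s2 = 1 ∨ s2 = -1)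
    (h3 : s3 = 1 ∨ s3 = -1) (h4 : s4 = 1 ∨ s4 = -1) (x : ℕ × ℕ × ℕ × ℕ) (N : ℕ) (Δ : ℝ)
    (hN : 0 < N) (hΔ : 8 * Δ * √N < 1)
    (p1 : 0 < x.1) (p2 : 0 < x.2.1) (p3 : 0 < x.2.2.1) (p4 : 0 < x.2.2.2)
    (q1 : x.1 < 2 * N) (q2 : x.2.1 < 2 * N) (q3 : x.2.2.1 < 2 * N) (q4 : x.2.2.2 < 2 * N)
    (ha : al s1 s2 s3 s4 x ≠ 0) (hb : |al s1 s2 s3 s4 x| ≤ Δ) :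
    |(kI x : ℝ) + 4 * (s3 * s4) * mI x * √(x.2.2.1 * x.2.2.2 : ℕ)| ≤ 54 * Δ * N * √N ∧
    (kI x)^2 - 16 * (mI x)^2 * (x.2.2.1 * x.2.2.2 : ℕ) ≠ 0 := by
  obtain ⟨n1, n2, n3, n4⟩ := x
  obtain ⟨t1, u1⟩ := aux_sgn s1 h1
  obtain ⟨t2, u2⟩ := aux_sgn s2 h2
  obtain ⟨t3, u3⟩ := aux_sgn s3 h3
  obtain ⟨t4, u4⟩ := aux_sgn s4 h4
  simp only [al] at *
  have hN' : (1:ℝ) ≤ N := by exact_mod_cast hN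
  have hsN : (1:ℝ) ≤ √N := Real.one_le_sqrt.mpr hN'
  have hΔ0 : 0 ≤ Δ := le_trans (abs_nonneg _) hb
  have sq1 := Real.sq_sqrt (Nat.cast_nonneg n1 : (0:ℝ) ≤ n1)
  have sq2 := Real.sq_sqrt (Nat.cast_nonneg n2 : (0:ℝ) ≤ n2)
  have sq3 := Real.sq_sqrt (Nat.cast_nonneg n3 : (0:ℝ) ≤ n3)
  have sq4 := Real.sq_sqrt (Nat.cast_nonneg n4 : (0:ℝ) ≤ n4)
  have sqN := Real.sq_sqrt (Nat.cast_nonneg N : (0:ℝ) ≤ N)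
  have bnd : ∀ n : ℕ, n < 2 * N → √(n:ℝ) ≤ 3 / 2 * √N := by
    intro n hn
    rw [Real.sqrt_le_left (by positivity)]
    have : (n:ℝ) ≤ 2 * N := by exact_mod_cast hn.le
    nlinarith
  have bnd1 : ∀ n : ℕ, 0 < n → 1 ≤ √(n:ℝ) := fun n hn => Real.one_le_sqrt.mpr (by exact_mod_cast hn)
  have b1 := bnd n1 q1
  have b2 := bnd n2 q2
  have b3 := bnd n3 q3
  have b4 := bnd n4 q4
  have c1 := bnd1 n1 p1
  have c2 := bnd1 n2 p2
  have ea : √((n1 * n2 : ℕ):ℝ) = √(n1:ℝ) * √(n2:ℝ) := by push_cast; rw [Real.sqrt_mul (by positivity)]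
  have eb : √((n3 * n4 : ℕ):ℝ) = √(n3:ℝ) * √(n4:ℝ) := by push_cast; rw [Real.sqrt_mul (by positivity)]
  set A := √(n1:ℝ)
  set A2 := √(n2:ℝ)
  set A3 := √(n3:ℝ)
  set A4 := √(n4:ℝ)
  have A30 : 0 ≤ A3 := Real.sqrt_nonneg _
  have A40 : 0 ≤ A4 := Real.sqrt_nonneg _
  set α' : ℝ := s1 * A + s2 * A2 - s3 * A3 - s4 * A4 with hα'
  set η : ℝ := (s1 * A + s2 * A2 + s3 * A3 + s4 * A4) * α' with hη
  have habs : ∀ (s : ℝ) (A : ℝ), |s| = 1 → 0 ≤ A → |s * A| = A := by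
    intro s A hs hA; rw [abs_mul, hs, one_mul, abs_of_nonneg hA]
  have d1 : |α'| ≤ 6 * √N := by
    have w1 := abs_le.mp (habs s1 A u1 (by linarith)).le
    have w2 := abs_le.mp (habs s2 A2 u2 (by linarith)).le
    have w3 := abs_le.mp (habs s3 A3 u3 (by linarith)).le
    have w4 := abs_le.mp (habs s4 A4 u4 (by linarith)).le
    rw [abs_le]; constructor <;> linarith [w1.1, w1.2, w2.1, w2.2, w3.1, w3.2, w4.1, w4.2]
  have d2 : |η| ≤ 6 * Δ * √N := by
    rw [hη, abs_mul]
    calc _ ≤ Δ * (6 * √N) := by gcongr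
      _ = _ := by ring
  have d3 : |η| < 1 := by linarith
  have em : (mI (n1, n2, n3, n4) : ℝ) = n1 + n2 - n3 - n4 := by simp [mI]
  have ek : (kI (n1, n2, n3, n4) : ℝ) = 4 * n1 * n2 - 4 * n3 * n4 - (mI (n1, n2, n3, n4) : ℝ)^2 := by simp [kI]
  have eη : η = (mI (n1, n2, n3, n4) : ℝ) + 2 * (s1 * s2) * (A * A2) - 2 * (s3 * s4) * (A3 * A4) := by
    rw [hη, hα', em]
    linear_combination A^2 * t1 + sq1 + A2^2 * t2 + sq2 - A3^2 * t3 - sq3 - A4^2 * t4 - sq4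
  have eA : (A * A2)^2 = n1 * n2 := by rw [mul_pow, sq1, sq2]
  have eB : (A3 * A4)^2 = n3 * n4 := by rw [mul_pow, sq3, sq4]
  have t12 : ((s1:ℝ) * s2)^2 = 1 := by rw [mul_pow, t1, t2]; norm_num
  have t34 : ((s3:ℝ) * s4)^2 = 1 := by rw [mul_pow, t3, t4]; norm_num
  constructor
  · rw [eb]
    have e5 : (kI (n1, n2, n3, n4) : ℝ) + 4 * (s3 * s4) * mI (n1, n2, n3, n4) * (A3 * A4) = η * (4 * (s1 * s2) * (A * A2) - η) := by
      rw [ek, eη]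
      linear_combination (-4:ℝ) * eA + 4 * eB + (-4 * (A * A2)^2) * t12 + (4 * (A3 * A4)^2) * t34
    rw [e5, abs_mul]
    have d5 : |4 * ((s1:ℝ) * s2) * (A * A2) - η| ≤ 9 * N := by
      have w1 : |4 * ((s1:ℝ) * s2) * (A * A2)| ≤ 8 * N := by
        rw [show 4 * ((s1:ℝ) * s2) * (A * A2) = (s1 * s2) * (4 * (A * A2)) by ring,
          habs _ _ (by rw [abs_mul, u1, u2, one_mul]) (by positivity)]
        have : A * A2 ≤ 2 * N := by
          have r1 : (n1:ℝ) ≤ 2 * N := by exact_mod_cast q1.le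
          have r2 : (n2:ℝ) ≤ 2 * N := by exact_mod_cast q2.le
          nlinarith [sq_nonneg (A - A2)]
        linarith
      have := abs_sub (4 * ((s1:ℝ) * s2) * (A * A2)) η
      linarith
    calc _ ≤ (6 * Δ * √N) * (9 * N) := by gcongr
      _ = _ := by ring
  · intro he
    have hη0 : η = 0 := by
      by_cases hm : mI (n1, n2, n3, n4) = 0
      · have hk : kI (n1, n2, n3, n4) = 0 := by
          rw [hm] at he; simpa using he
        rw [hm, hk] at ek
        have hab : (A * A2)^2 = (A3 * A4)^2 := by rw [eA, eB]; push_cast at ek; linarith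
        have hab' : A * A2 = A3 * A4 := by
          rw [sq_eq_sq₀ (by positivity) (by positivity)] at hab; exact hab
        rw [← hab', hm] at eη
        have hge : 1 ≤ A * A2 := by nlinarith
        have h12 : (s1:ℝ) * s2 = 1 ∨ (s1:ℝ) * s2 = -1 := by
          rcases h1 with rfl | rfl <;> rcases h2 with rfl | rfl <;> norm_num
        have h34 : (s3:ℝ) * s4 = 1 ∨ (s3:ℝ) * s4 = -1 := by
          rcases h3 with rfl | rfl <;> rcases h4 with rfl | rfl <;> norm_num
        rw [abs_lt] at d3
        rcases h12 with h | h <;> rcases h34 with h' | h' <;> rw [h, h'] at eη <;> push_cast at eη <;>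
          linarith [d3.1, d3.2]
      · obtain ⟨c, hc⟩ : 4 * mI (n1, n2, n3, n4) ∣ kI (n1, n2, n3, n4) := by
          rw [← Int.pow_dvd_pow_iff (n := 2) (by norm_num)]
          exact ⟨((n3 * n4 : ℕ) : ℤ), by linear_combination he⟩
        have hbc : ((n3 * n4 : ℕ) : ℤ) = c^2 := by
          have h16 : 16 * (mI (n1, n2, n3, n4))^2 ≠ 0 := by positivity
          apply mul_left_cancel₀ h16
          rw [hc] at he
          linear_combination -he
        have hbR : (A3 * A4)^2 = (c:ℝ)^2 := by rw [eB]; exact_mod_cast hbc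
        have haR : (2 * (A * A2))^2 = ((mI (n1, n2, n3, n4) : ℝ) + 2 * c)^2 := by
          have hcR : (kI (n1, n2, n3, n4) : ℝ) = 4 * mI (n1, n2, n3, n4) * c := by exact_mod_cast hc
          linear_combination 4 * eA - ek - 4 * eB + hcR + 4 * hbR
        have hintz : ∃ z : ℤ, η = z := by
          have u : ∃ z : ℤ, A3 * A4 = z := by
            rcases sq_eq_sq_iff_eq_or_eq_neg.mp hbR with h | h
            · exact ⟨c, h⟩
            · exact ⟨-c, by push_cast; exact h⟩
          have v : ∃ z : ℤ, 2 * (A * A2) = z := by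
            rcases sq_eq_sq_iff_eq_or_eq_neg.mp haR with h | h
            · exact ⟨mI (n1, n2, n3, n4) + 2 * c, by push_cast; exact h⟩
            · exact ⟨-(mI (n1, n2, n3, n4) + 2 * c), by push_cast; exact h⟩
          obtain ⟨z, hz⟩ := u
          obtain ⟨w, hw⟩ := v
          refine ⟨mI (n1, n2, n3, n4) + s1 * s2 * w - 2 * s3 * s4 * z, ?_⟩
          rw [eη]; push_cast; rw [← hz, ← hw]; ring
        obtain ⟨z, hz⟩ := hintz
        rw [hz] at d3 ⊢
        have : |z| < 1 := by exact_mod_cast d3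
        rw [Int.abs_lt_one_iff] at this
        simp [this]
    have hα0 : α' = 0 := by
      rcases mul_eq_zero.mp hη0 with h | h
      · exact absurd h ha
      · exact h
    set β : ℝ := s1 * A + s2 * A2 with hβ
    have e6 : s1 * A + s2 * A2 + s3 * A3 + s4 * A4 = 2 * β := by rw [hα'] at hα0; rw [hβ]; linarith
    rw [e6] at ha hb
    have hβ0 : β ≠ 0 := by intro h; apply ha; rw [h]; ring
    have hprod : (s1 * A + s2 * A2) * (s1 * A - s2 * A2) = n1 - n2 := by
      linear_combination A^2 * t1 + sq1 - A2^2 * t2 - sq2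
    have w1 := abs_le.mp (habs s1 A u1 (by linarith)).le
    have w2 := abs_le.mp (habs s2 A2 u2 (by linarith)).le
    have hle : |s1 * A - s2 * A2| ≤ 3 * √N := by
      rw [abs_le]; constructor <;> linarith [w1.1, w1.2, w2.1, w2.2]
    rw [abs_mul] at hb
    norm_num at hb
    by_cases hn : n1 = n2
    · subst hn
      have : s1 * A - s2 * A = 0 := by
        have : β * (s1 * A - s2 * A) = 0 := by rw [hβ, hprod]; ring
        exact (mul_eq_zero.mp this).resolve_left hβ0
      have e7 : β = s1 * (2 * A) := by rw [hβ]; linarith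
      rw [e7, habs _ _ u1 (by linarith)] at hb
      have : Δ * 1 ≤ Δ * √N := mul_le_mul_of_nonneg_left hsN hΔ0
      linarith
    · have h1 : (1:ℝ) ≤ |(n1:ℝ) - n2| := by
        have : (1:ℤ) ≤ |(n1:ℤ) - n2| := Int.one_le_abs (by omega)
        exact_mod_cast this
      rw [← hprod, abs_mul] at h1
      have : |s1 * A + s2 * A2| * |s1 * A - s2 * A2| ≤ (Δ/2) * (3 * √N) := by
        gcongr
        rw [← hβ]; linarith
      linarith

def QP (s1 s2 s3 s4 : ℤ) (N1 N2 N3 N4 : ℕ) (Δ : ℝ) (x : ℕ × ℕ × ℕ × ℕ) : Prop :=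
  (N1 ≤ x.1 ∧ x.1 < 2 * N1) ∧ (N2 ≤ x.2.1 ∧ x.2.1 < 2 * N2) ∧
  (N3 ≤ x.2.2.1 ∧ x.2.2.1 < 2 * N3) ∧ (N4 ≤ x.2.2.2 ∧ x.2.2.2 < 2 * N4) ∧
  al s1 s2 s3 s4 x ≠ 0 ∧ |al s1 s2 s3 s4 x| ≤ Δ

lemma aux_fib2 (N : ℕ) (D : ℝ) (hD : ∀ m : ℕ, 0 < m → m ≤ 64 * N^2 → ((m).divisors.card : ℝ) ≤ D)
    (S : Finset (ℕ × ℕ × ℕ × ℕ))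
    (hS : ∀ x ∈ S, (0 < x.1 ∧ x.1 < 2 * N) ∧ (0 < x.2.1 ∧ x.2.1 < 2 * N) ∧
       (0 < x.2.2.1 ∧ x.2.2.1 < 2 * N) ∧ (0 < x.2.2.2 ∧ x.2.2.2 < 2 * N)) (hN : 0 < N) :
    (S.card : ℝ) ≤ D^2 * ((S.image (fun x => (mI x, kI x, x.2.2.1 * x.2.2.2))).card : ℝ) := by
  have hD1 : 1 ≤ D := by
    refine le_trans ?_ (hD 1 (by norm_num) (by nlinarith))
    simp
  apply aux_fiber S _ (fun x => (mI x, kI x, x.2.2.1 * x.2.2.2))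
  · intro x hx; exact Finset.mem_image_of_mem _ hx
  · rintro y hy
    obtain ⟨x0, hx0, rfl⟩ := Finset.mem_image.mp hy
    set F := S.filter (fun x => (mI x, kI x, x.2.2.1 * x.2.2.2) = (mI x0, kI x0, x0.2.2.1 * x0.2.2.2)) with hF
    have hsub : F.card ≤ ((x0.1 * x0.2.1).divisors ×ˢ (x0.2.2.1 * x0.2.2.2).divisors).card := by
      have prop : ∀ x ∈ F, x.1 * x.2.1 = x0.1 * x0.2.1 ∧ x.2.2.1 * x.2.2.2 = x0.2.2.1 * x0.2.2.2 ∧ x ∈ S := by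
        intro x hx
        rw [hF, Finset.mem_filter] at hx
        obtain ⟨hxS, he⟩ := hx
        simp only [Prod.mk.injEq] at he
        obtain ⟨e1, e2, e3⟩ := he
        refine ⟨?_, e3, hxS⟩
        simp only [kI] at e2
        rw [e1] at e2
        have e3' : (x.2.2.1 : ℤ) * x.2.2.2 = x0.2.2.1 * x0.2.2.2 := by exact_mod_cast e3
        have : (x.1 : ℤ) * x.2.1 = x0.1 * x0.2.1 := by nlinarith
        exact_mod_cast this
      apply Finset.card_le_card_of_injOn (fun x => (x.1, x.2.2.1))
      · intro x hx
        obtain ⟨e1, e2, hxS⟩ := prop x hx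
        have h0 := hS x0 hx0
        simp only [Finset.coe_product, Set.mem_prod, Finset.mem_coe, Nat.mem_divisors]
        refine ⟨⟨⟨_, e1.symm⟩, ?_⟩, ⟨⟨_, e2.symm⟩, ?_⟩⟩
        · have := h0.1.1; have := h0.2.1.1; positivity
        · have := h0.2.2.1.1; have := h0.2.2.2.1; positivity
      · intro x hx y hy hxy
        obtain ⟨e1, e2, hxS⟩ := prop x hx
        obtain ⟨f1, f2, hyS⟩ := prop y hy
        simp only [Prod.mk.injEq] at hxy
        have hx' := hS x hxS
        obtain ⟨x1, x2, x3, x4⟩ := x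
        obtain ⟨y1, y2, y3, y4⟩ := y
        simp only at *
        obtain ⟨rfl, rfl⟩ := hxy
        have g1 : x2 = y2 := Nat.eq_of_mul_eq_mul_left hx'.1.1 (e1.trans f1.symm)
        have g2 : x4 = y4 := Nat.eq_of_mul_eq_mul_left hx'.2.2.1.1 (e2.trans f2.symm)
        rw [g1, g2]
    rw [Finset.card_product] at hsub
    have h0 := hS x0 hx0
    have r1 : ((x0.1 * x0.2.1).divisors.card : ℝ) ≤ D := by
      apply hD
      · have := h0.1.1; have := h0.2.1.1; positivity
      · have := h0.1.2; have := h0.2.1.2; nlinarith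
    have r2 : ((x0.2.2.1 * x0.2.2.2).divisors.card : ℝ) ≤ D := by
      apply hD
      · have := h0.2.2.1.1; have := h0.2.2.2.1; positivity
      · have := h0.2.2.1.2; have := h0.2.2.2.2; nlinarith
    calc (F.card : ℝ) ≤ ((x0.1 * x0.2.1).divisors.card : ℝ) * ((x0.2.2.1 * x0.2.2.2).divisors.card : ℝ) := by exact_mod_cast hsub
      _ ≤ D * D := by gcongr
      _ = D^2 := by ring

/-- large `θ` -/
lemma aux_W1 (N B : ℕ) (t θ : ℝ) (hθ : 1 ≤ θ) (hN : 0 < N) (W : Finset (ℤ × ℤ × ℕ))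
    (hW : ∀ w ∈ W, |w.1| ≤ 4 * N ∧ (B ≤ w.2.2 ∧ w.2.2 < 4 * B) ∧ |(w.2.1 : ℝ) + 4 * t * w.1 * √w.2.2| ≤ θ) :
    (W.card : ℝ) ≤ 81 * N * B * θ := by
  have key : (W.card : ℝ) ≤ (2 * θ / 1 + 1) * (((Finset.Icc (-(4 * N : ℤ)) (4*N)) ×ˢ (Finset.Ico B (4*B))).card : ℝ) := by
    apply aux_fiber W _ (fun w => (w.1, w.2.2))
    · intro w hw
      obtain ⟨h1, h2, h3⟩ := hW w hw
      simp only [Finset.mem_product, Finset.mem_Icc, Finset.mem_Ico]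
      exact ⟨abs_le.mp h1, h2⟩
    · rintro ⟨m, b⟩ hy
      apply aux_spaced _ (fun w => (w.2.1 : ℝ)) (-(4 * t * m * √b) - θ)
      · norm_num
      · intro w hw
        rw [Finset.mem_filter] at hw
        obtain ⟨h1, h2, h3⟩ := hW w hw.1
        have := hw.2
        simp only [Prod.mk.injEq] at this
        rw [this.1, this.2, abs_le] at h3
        constructor <;> linarith [h3.1, h3.2]
      · intro w hw v hv hne
        rw [Finset.mem_filter] at hw hv
        obtain ⟨w1, w2, w3⟩ := w
        obtain ⟨v1, v2, v3⟩ := v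
        simp only [Prod.mk.injEq] at hw hv
        obtain ⟨_, rfl, rfl⟩ := hw
        obtain ⟨_, rfl, rfl⟩ := hv
        have : w2 ≠ v2 := by rintro rfl; exact hne rfl
        have : (1:ℤ) ≤ |w2 - v2| := Int.one_le_abs (by omega)
        exact_mod_cast this
      · linarith
  have c1 : ((((Finset.Icc (-(4 * N : ℤ)) (4*N)) ×ˢ (Finset.Ico B (4*B))).card : ℕ) : ℝ) = (8 * N + 1) * (3 * B) := by
    rw [Finset.card_product]
    simp only [Int.card_Icc, Nat.card_Ico]
    have e1 : (4 * (N:ℤ) + 1 - -(4 * N)).toNat = 8 * N + 1 := by omega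
    have e2 : 4 * B - B = 3 * B := by omega
    rw [e1, e2]; push_cast; ring
  rw [c1] at key
  have hN' : (1:ℝ) ≤ N := by exact_mod_cast hN
  calc _ ≤ _ := key
    _ ≤ (3 * θ) * ((9 * N) * (3 * B)) := by
      gcongr <;> linarith
    _ = _ := by ring

/-- small `θ` -/
lemma aux_W2 (N B : ℕ) (t θ D : ℝ) (ht : |t| = 1) (hθ : 0 < θ) (hθ1 : θ < 1) (hN : 0 < N) (hB : 0 < B)
    (hD : ∀ m : ℕ, 0 < m → m ≤ 64 * N^2 → ((m).divisors.card : ℝ) ≤ D) (W : Finset (ℤ × ℤ × ℕ))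
    (hW : ∀ w ∈ W, |w.1| ≤ 4 * N ∧ (B ≤ w.2.2 ∧ w.2.2 < 4 * B) ∧ |(w.2.1 : ℝ) + 4 * t * w.1 * √w.2.2| ≤ θ
       ∧ w.2.1^2 - 16 * w.1^2 * w.2.2 ≠ 0) :
    (W.card : ℝ) ≤ 8 * (1 + Real.log (8 * N))^2 * D * (2616 * θ * (4 * N) * B + 21 * √θ * (4 * N) * (B:ℝ)^((3:ℝ)/4)) := by
  have hN' : (1:ℝ) ≤ N := by exact_mod_cast hN
  have hD1 : 1 ≤ D := by
    refine le_trans ?_ (hD 1 (by norm_num) (by nlinarith))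
    simp
  set Z := W.image (fun w => (w.1.natAbs, w.2.1.natAbs, w.2.2)) with hZ
  have k1 : (W.card : ℝ) ≤ 4 * (Z.card : ℝ) := by
    apply aux_fiber W Z (fun w => (w.1.natAbs, w.2.1.natAbs, w.2.2))
    · intro w hw; exact Finset.mem_image_of_mem _ hw
    · rintro ⟨m, k, b⟩ hy
      have : (W.filter (fun w => (w.1.natAbs, w.2.1.natAbs, w.2.2) = (m, k, b))) ⊆
          ({(m:ℤ), -(m:ℤ)} : Finset ℤ) ×ˢ (({(k:ℤ), -(k:ℤ)} : Finset ℤ) ×ˢ ({b} : Finset ℕ)) := by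
        intro w hw
        rw [Finset.mem_filter] at hw
        have := hw.2
        simp only [Prod.mk.injEq] at this
        simp only [Finset.mem_product, Finset.mem_insert, Finset.mem_singleton]
        omega
      have h2 := Finset.card_le_card this
      rw [Finset.card_product, Finset.card_product, Finset.card_singleton] at h2
      have h3 : ({(m:ℤ), -(m:ℤ)} : Finset ℤ).card ≤ 2 := Finset.card_le_two
      have h4 : ({(k:ℤ), -(k:ℤ)} : Finset ℤ).card ≤ 2 := Finset.card_le_two
      have : (W.filter (fun w => (w.1.natAbs, w.2.1.natAbs, w.2.2) = (m, k, b))).card ≤ 4 := by nlinarith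
      exact_mod_cast this
  have hZP : ∀ x ∈ Z, 0 < x.1 ∧ x.1 ≤ 4 * N ∧ B ≤ x.2.2 ∧ x.2.2 < 4 * B ∧
      |(x.2.1 : ℝ) - 4 * x.1 * √(x.2.2)| ≤ θ ∧ ((x.2.1 : ℤ)^2 - 16 * (x.1 : ℤ)^2 * x.2.2 ≠ 0) := by
    intro x hx
    obtain ⟨w, hw, rfl⟩ := Finset.mem_image.mp hx
    obtain ⟨h1, ⟨h2, h3⟩, h4, h5⟩ := hW w hw
    refine ⟨?_, ?_, h2, h3, ?_, ?_⟩
    · rw [Int.natAbs_pos]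
      intro h0
      rw [h0] at h4 h5
      simp only [Int.cast_zero, mul_zero, zero_mul, add_zero] at h4
      have : |w.2.1| < 1 := by
        have : (|w.2.1| : ℝ) < 1 := lt_of_le_of_lt h4 hθ1
        exact_mod_cast this
      rw [Int.abs_lt_one_iff] at this
      rw [this] at h5; simp at h5
    · rw [Int.abs_eq_natAbs] at h1; dsimp only; omega
    · refine le_trans ?_ h4
      rw [Nat.cast_natAbs, Nat.cast_natAbs, Int.cast_abs, Int.cast_abs]
      have := abs_abs_sub_abs_le (w.2.1 : ℝ) (-(4 * t * w.1 * √w.2.2))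
      rw [sub_neg_eq_add, abs_neg, abs_mul, abs_mul, abs_mul, ht, abs_of_nonneg (Real.sqrt_nonneg _)] at this
      norm_num at this
      exact this
    · simpa using h5
  set L := Nat.log 2 (4 * N) with hL
  have k2 : (Z.card : ℝ) ≤ (D * (2616 * θ * (4 * N) * B + 21 * √θ * (4 * N) * (B:ℝ)^((3:ℝ)/4)) * (1 + Real.log (8 * N))) * ((Finset.range (L + 1)).card : ℝ) := by
    apply aux_fiber Z _ (fun x => Nat.log 2 x.1)
    · intro x hx
      rw [Finset.mem_range, Nat.lt_succ_iff]
      exact Nat.log_mono_right (hZP x hx).2.1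
    · intro i hi
      rw [Finset.mem_range, Nat.lt_succ_iff] at hi
      have hi' : 2^i ≤ 4 * N := by
        calc 2^i ≤ 2^L := Nat.pow_le_pow_right (by norm_num) hi
          _ ≤ 4 * N := Nat.pow_log_le_self 2 (by omega)
      have hiR : ((2^i : ℕ) : ℝ) ≤ 4 * N := by exact_mod_cast hi'
      refine (aux_Z (2^i) B (by positivity) hB θ D hθ hθ1.le ?_ _ ?_).trans ?_
      · intro m hm hm2
        apply hD
        · positivity
        · nlinarith
      · intro x hx
        rw [Finset.mem_filter] at hx
        obtain ⟨h1, h2, h3⟩ := hZP x hx.1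
        have e := hx.2
        refine ⟨?_, ?_, h3⟩
        · rw [← e]; exact Nat.pow_log_le_self 2 (by omega)
        · rw [← e, ← pow_succ']
          exact Nat.lt_pow_succ_log_self (by norm_num) _
      · have : Real.log (2 * (2^i : ℕ)) ≤ Real.log (8 * N) := by
          apply Real.log_le_log (by positivity); linarith
        have h0 : 0 ≤ Real.log (2 * (2^i : ℕ)) := by
          apply Real.log_nonneg
          have : (1:ℝ) ≤ (2^i : ℕ) := by exact_mod_cast Nat.one_le_two_pow
          linarith
        gcongr
  have k3 : ((Finset.range (L+1)).card : ℝ) ≤ 2 * (1 + Real.log (8 * N)) := by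
    rw [Finset.card_range]; push_cast
    have h1 : ((2:ℝ))^L ≤ 8 * N := by
      have : 2^L ≤ 4 * N := Nat.pow_log_le_self 2 (by omega)
      have : ((2:ℝ))^L ≤ 4 * N := by exact_mod_cast this
      linarith
    have h2 := Real.log_le_log (by positivity) h1
    rw [Real.log_pow] at h2
    have h3 := Real.log_two_gt_d9
    have h4 : (L:ℝ) * (1/2) ≤ L * Real.log 2 := by gcongr; linarith
    linarith
  have hl : 0 ≤ Real.log (8 * N) := Real.log_nonneg (by linarith)
  calc _ ≤ _ := k1
    _ ≤ 4 * ((D * (2616 * θ * (4 * N) * B + 21 * √θ * (4 * N) * (B:ℝ)^((3:ℝ)/4)) * (1 + Real.log (8 * N))) * (2 * (1 + Real.log (8 * N)))) := by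
      gcongr
      exact k2.trans (by gcongr)
    _ = _ := by ring

lemma aux_2b (s1 s2 s3 s4 : ℤ) (h1 : s1 = 1 ∨ s1 = -1) (h2 : s2 = 1 ∨ s2 = -1)
    (h3 : s3 = 1 ∨ s3 = -1) (h4 : s4 = 1 ∨ s4 = -1) (N1 N2 N3 N4 : ℕ) (p1 : 0 < N1) (p2 : 0 < N2)
    (p3 : 0 < N3) (p4 : 0 < N4) (l2 : N2 ≤ N1) (l3 : N3 ≤ N1) (l4 : N4 ≤ N1)
    (Δ D : ℝ) (hΔ : 0 < Δ) (hΔ1 : 8 * Δ * √N1 < 1)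
    (hD : ∀ m : ℕ, 0 < m → m ≤ 64 * N1^2 → ((m).divisors.card : ℝ) ≤ D)
    (S : Finset (ℕ × ℕ × ℕ × ℕ)) (hS : ∀ x ∈ S, QP s1 s2 s3 s4 N1 N2 N3 N4 Δ x) :
    (S.card : ℝ) ≤ 10000000 * D^3 * (1 + Real.log (8 * N1))^2 *
      (Δ * N1^2 * √N1 * (N3 * N4) + √Δ * (N1:ℝ)^((7:ℝ)/4) * (N3 * N4 : ℝ)^((3:ℝ)/4)) := by
  have hN' : (1:ℝ) ≤ N1 := by exact_mod_cast p1
  have hD1 : 1 ≤ D := by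
    refine le_trans ?_ (hD 1 (by norm_num) (by nlinarith))
    simp
  have hl : 0 ≤ Real.log (8 * N1) := Real.log_nonneg (by linarith)
  have hsN : (1:ℝ) ≤ √N1 := Real.one_le_sqrt.mpr hN'
  have f0 := aux_fib2 N1 D hD S (by
    intro x hx
    obtain ⟨⟨a1, a2⟩, ⟨b1, b2⟩, ⟨c1, c2⟩, ⟨d1, d2⟩, _, _⟩ := hS x hx
    refine ⟨⟨?_, ?_⟩, ⟨?_, ?_⟩, ⟨?_, ?_⟩, ⟨?_, ?_⟩⟩ <;> omega) p1
  set W := S.image (fun x => (mI x, kI x, x.2.2.1 * x.2.2.2)) with hWdef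
  set θ := 54 * Δ * N1 * √N1 with hθ
  have hθ0 : 0 < θ := by positivity
  have hW : ∀ w ∈ W, |w.1| ≤ 4 * N1 ∧ (N3 * N4 ≤ w.2.2 ∧ w.2.2 < 4 * (N3 * N4)) ∧ |(w.2.1 : ℝ) + 4 * (s3 * s4) * w.1 * √w.2.2| ≤ θ
       ∧ w.2.1^2 - 16 * w.1^2 * w.2.2 ≠ 0 := by
    intro w hw
    obtain ⟨x, hx, rfl⟩ := Finset.mem_image.mp hw
    obtain ⟨⟨a1, a2⟩, ⟨b1, b2⟩, ⟨c1, c2⟩, ⟨d1, d2⟩, e1, e2⟩ := hS x hx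
    have := aux_key s1 s2 s3 s4 h1 h2 h3 h4 x N1 Δ p1 hΔ1 (by omega) (by omega) (by omega) (by omega) (by omega) (by omega) (by omega) (by omega) e1 e2
    refine ⟨?_, ⟨?_, ?_⟩, this.1, this.2⟩
    · simp only [mI]; rw [abs_le]; constructor <;> omega
    · exact Nat.mul_le_mul c1 d1
    · calc x.2.2.1 * x.2.2.2 < (2 * N3) * (2 * N4) := Nat.mul_lt_mul'' c2 d2
        _ = _ := by ring
  have hB0 : 0 < N3 * N4 := by positivity
  have hlogsq : 1 ≤ (1 + Real.log (8 * N1))^2 := by nlinarith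
  set L := (1 + Real.log (8 * N1))^2
  have X2 : 0 ≤ √Δ * (N1:ℝ)^((7:ℝ)/4) * (N3 * N4 : ℝ)^((3:ℝ)/4) := by positivity
  have X1 : 0 ≤ Δ * N1^2 * √N1 * (N3 * N4) := by positivity
  by_cases hc : 1 ≤ θ
  · have := aux_W1 N1 (N3 * N4) (s3 * s4) θ hc p1 W (fun w hw => ⟨(hW w hw).1, (hW w hw).2.1, (hW w hw).2.2.1⟩)
    calc _ ≤ _ := f0
      _ ≤ D^2 * (81 * N1 * (N3 * N4 : ℕ) * θ) := by gcongr
      _ = 4374 * D^2 * 1 * (Δ * N1^2 * √N1 * (N3 * N4)) := by rw [hθ]; push_cast; ring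
      _ ≤ 10000000 * D^3 * L * (Δ * N1^2 * √N1 * (N3 * N4) + √Δ * (N1:ℝ)^((7:ℝ)/4) * (N3 * N4 : ℝ)^((3:ℝ)/4)) := by
        gcongr ?_ * ?_ * ?_ * ?_
        · norm_num
        · exact pow_le_pow_right₀ hD1 (by norm_num)
        · linarith
  · push Not at hc
    have := aux_W2 N1 (N3 * N4) (s3 * s4) θ D (by rw [abs_mul, (aux_sgn s3 h3).2, (aux_sgn s4 h4).2, one_mul]) hθ0 hc p1 hB0 hD W hW
    have hsθ : √θ ≤ 8 * √Δ * (N1:ℝ)^((3:ℝ)/4) := by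
      have e : (8 * √Δ * (N1:ℝ)^((3:ℝ)/4))^2 = 64 * Δ * N1 * √N1 := by
        have e1 : ((N1:ℝ)^((3:ℝ)/4))^2 = N1 * √N1 := by
          rw [← Real.rpow_natCast, ← Real.rpow_mul (by positivity), Real.sqrt_eq_rpow]
          nth_rewrite 2 [← Real.rpow_one (N1:ℝ)]
          rw [← Real.rpow_add (by positivity)]; norm_num
        rw [mul_pow, e1, mul_pow, Real.sq_sqrt hΔ.le]; ring
      rw [Real.sqrt_le_left (by positivity), e, hθ]
      gcongr; norm_num
    have e74 : (N1:ℝ)^((7:ℝ)/4) = N1 * (N1:ℝ)^((3:ℝ)/4) := by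
      nth_rewrite 2 [← Real.rpow_one (N1:ℝ)]
      rw [← Real.rpow_add (by positivity)]; norm_num
    calc _ ≤ _ := f0
      _ ≤ D^2 * (8 * L * D * (2616 * θ * (4 * N1) * (N3 * N4 : ℕ) + 21 * √θ * (4 * N1) * ((N3 * N4 : ℕ):ℝ)^((3:ℝ)/4))) := by gcongr
      _ ≤ D^2 * (8 * L * D * (2616 * θ * (4 * N1) * (N3 * N4 : ℕ) + 21 * (8 * √Δ * (N1:ℝ)^((3:ℝ)/4)) * (4 * N1) * ((N3 * N4 : ℕ):ℝ)^((3:ℝ)/4))) := by gcongr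
      _ = D^3 * L * (4520448 * (Δ * N1^2 * √N1 * (N3 * N4)) + 5376 * (√Δ * (N1:ℝ)^((7:ℝ)/4) * (N3 * N4 : ℝ)^((3:ℝ)/4))) := by
        rw [e74, hθ]; push_cast; ring
      _ ≤ D^3 * L * (10000000 * (Δ * N1^2 * √N1 * (N3 * N4)) + 10000000 * (√Δ * (N1:ℝ)^((7:ℝ)/4) * (N3 * N4 : ℝ)^((3:ℝ)/4))) := by
        gcongr <;> norm_num
      _ = _ := by ring

/-- Cauchy–Schwarz for coincidences. -/
lemma aux_CS {ι κ : Type*} (X : Finset ι) (Y : Finset κ) (f : ι → ℤ) (g : κ → ℤ) :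
    ((((X ×ˢ Y).filter (fun z => f z.1 = g z.2)).card : ℝ))^2 ≤
      (((X ×ˢ X).filter (fun z => f z.1 = f z.2)).card : ℝ) *
      (((Y ×ˢ Y).filter (fun z => g z.1 = g z.2)).card : ℝ) := by
  set K := X.image f ∪ Y.image g with hK
  have hf : ∀ x ∈ X, f x ∈ K := fun x hx => Finset.mem_union_left _ (Finset.mem_image_of_mem _ hx)
  have hg : ∀ x ∈ Y, g x ∈ K := fun x hx => Finset.mem_union_right _ (Finset.mem_image_of_mem _ hx)
  have e1 : ((X ×ˢ Y).filter (fun z => f z.1 = g z.2)).card = ∑ k ∈ K, (X.filter (fun x => f x = k)).card * (Y.filter (fun x => g x = k)).card := by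
    rw [Finset.card_eq_sum_card_fiberwise (f := fun z => f z.1) (t := K)]
    · apply Finset.sum_congr rfl
      intro k hk
      rw [← Finset.card_product]
      congr 1; ext ⟨a, b⟩; simp only [Finset.mem_filter, Finset.mem_product]; grind
    · intro z hz
      simp only [Finset.coe_filter, Finset.mem_product, Set.mem_setOf_eq] at hz
      exact hf _ hz.1.1
  have e2 : ((X ×ˢ X).filter (fun z => f z.1 = f z.2)).card = ∑ k ∈ K, (X.filter (fun x => f x = k)).card ^ 2 := by
    rw [Finset.card_eq_sum_card_fiberwise (f := fun z => f z.1) (t := K)]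
    · apply Finset.sum_congr rfl
      intro k hk
      rw [sq, ← Finset.card_product]
      congr 1; ext ⟨a, b⟩; simp only [Finset.mem_filter, Finset.mem_product]; grind
    · intro z hz
      simp only [Finset.coe_filter, Finset.mem_product, Set.mem_setOf_eq] at hz
      exact hf _ hz.1.1
  have e3 : ((Y ×ˢ Y).filter (fun z => g z.1 = g z.2)).card = ∑ k ∈ K, (Y.filter (fun x => g x = k)).card ^ 2 := by
    rw [Finset.card_eq_sum_card_fiberwise (f := fun z => g z.1) (t := K)]
    · apply Finset.sum_congr rfl
      intro k hk
      rw [sq, ← Finset.card_product]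
      congr 1; ext ⟨a, b⟩; simp only [Finset.mem_filter, Finset.mem_product]; grind
    · intro z hz
      simp only [Finset.coe_filter, Finset.mem_product, Set.mem_setOf_eq] at hz
      exact hg _ hz.1.1
  rw [e1, e2, e3]
  push_cast
  exact Finset.sum_mul_sq_le_sq_mul_sq K _ _

lemma aux_block {ι : Type*} (X : Finset ι) (f : ι → ℤ) (h : ι → ℕ) (G : ℕ) (hG : ∀ x ∈ X, h x < G) :
    ((X ×ˢ X).filter (fun z => f z.1 = f z.2)).card ≤
      G * ((X ×ˢ X).filter (fun z => f z.1 = f z.2 ∧ h z.1 = h z.2)).card := by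
  set K := X.image f with hK
  have hf : ∀ x ∈ X, f x ∈ K := fun x hx => (Finset.mem_image_of_mem _ hx)
  have e2 : ((X ×ˢ X).filter (fun z => f z.1 = f z.2)).card = ∑ k ∈ K, (X.filter (fun x => f x = k)).card ^ 2 := by
    rw [Finset.card_eq_sum_card_fiberwise (f := fun z => f z.1) (t := K)]
    · apply Finset.sum_congr rfl
      intro k hk
      rw [sq, ← Finset.card_product]
      congr 1; ext ⟨a, b⟩; simp only [Finset.mem_filter, Finset.mem_product]; grind
    · intro z hz
      simp only [Finset.coe_filter, Finset.mem_product, Set.mem_setOf_eq] at hz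
      exact hf _ hz.1.1
  have e3 : ((X ×ˢ X).filter (fun z => f z.1 = f z.2 ∧ h z.1 = h z.2)).card = ∑ k ∈ K ×ˢ Finset.range G, (X.filter (fun x => f x = k.1 ∧ h x = k.2)).card ^ 2 := by
    rw [Finset.card_eq_sum_card_fiberwise (f := fun z => (f z.1, h z.1)) (t := K ×ˢ Finset.range G)]
    · apply Finset.sum_congr rfl
      rintro ⟨k, l⟩ hk
      rw [sq, ← Finset.card_product]
      congr 1; ext ⟨a, b⟩; simp only [Finset.mem_filter, Finset.mem_product, Prod.mk.injEq]; grind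
    · intro z hz
      simp only [Finset.coe_filter, Finset.mem_product, Set.mem_setOf_eq] at hz
      simp only [Finset.coe_product, Set.mem_prod, Finset.mem_coe, Finset.mem_range]
      exact ⟨hf _ hz.1.1, hG _ hz.1.1⟩
  rw [e2, e3, Finset.sum_product, Finset.mul_sum]
  apply Finset.sum_le_sum
  intro k hk
  have e4 : (X.filter (fun x => f x = k)).card = ∑ g ∈ Finset.range G, (X.filter (fun x => f x = k ∧ h x = g)).card := by
    rw [Finset.card_eq_sum_card_fiberwise (f := h) (t := Finset.range G)]
    · apply Finset.sum_congr rfl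
      intro g hg; rw [Finset.filter_filter]
    · intro z hz
      simp only [Finset.coe_filter, Set.mem_setOf_eq] at hz
      simpa using hG _ hz.1
  rw [e4]
  have := sq_sum_le_card_mul_sum_sq (s := Finset.range G) (f := fun g => (X.filter (fun x => f x = k ∧ h x = g)).card)
  rwa [Finset.card_range] at this

lemma aux_sqrt_gap (N a b : ℕ) (hN : 0 < N) (ha : a < 2 * N) (hb : b < 2 * N) (hab : a < b) :
    1 / (3 * √N) ≤ √(b:ℝ) - √(a:ℝ) := by
  have hN' : (1:ℝ) ≤ N := by exact_mod_cast hN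
  have hsN : (1:ℝ) ≤ √N := Real.one_le_sqrt.mpr hN'
  have sqN := Real.sq_sqrt (Nat.cast_nonneg N : (0:ℝ) ≤ N)
  have bnd : ∀ n : ℕ, n < 2 * N → √(n:ℝ) ≤ 3 / 2 * √N := by
    intro n hn
    rw [Real.sqrt_le_left (by positivity)]
    have : (n:ℝ) ≤ 2 * N := by exact_mod_cast hn.le
    nlinarith
  have sa := Real.sq_sqrt (Nat.cast_nonneg a : (0:ℝ) ≤ a)
  have sb := Real.sq_sqrt (Nat.cast_nonneg b : (0:ℝ) ≤ b)
  have h1 : (a:ℝ) + 1 ≤ b := by exact_mod_cast hab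
  have h2 : √(a:ℝ) ≤ √(b:ℝ) := Real.sqrt_le_sqrt (by linarith)
  have := bnd a ha
  have := bnd b hb
  rw [div_le_iff₀ (by positivity)]
  have : (√(b:ℝ) - √(a:ℝ)) * (√(b:ℝ) + √(a:ℝ)) ≤ (√(b:ℝ) - √(a:ℝ)) * (3 * √N) := by
    apply mul_le_mul_of_nonneg_left <;> linarith
  nlinarith

lemma aux_F (N : ℕ) (hN : 0 < N) (c Δ : ℝ) (hΔ : 0 < Δ) (hc : 2 * Δ ≤ c)
    (S : Finset (ℕ × ℕ)) (hS : ∀ x ∈ S, (N ≤ x.1 ∧ x.1 < 2 * N) ∧ (N ≤ x.2 ∧ x.2 < 2 * N) ∧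
      |√(x.2:ℝ) - √(x.1:ℝ) - c| ≤ Δ) :
    (S.card : ℝ) ≤ 5 * c * √N + 200 * Δ * N * √N := by
  have hN' : (1:ℝ) ≤ N := by exact_mod_cast hN
  have hsN : (1:ℝ) ≤ √N := Real.one_le_sqrt.mpr hN'
  have sqN := Real.sq_sqrt (Nat.cast_nonneg N : (0:ℝ) ≤ N)
  have hc0 : 0 < c := by linarith
  have bnd : ∀ n : ℕ, n < 2 * N → √(n:ℝ) ≤ 3 / 2 * √N := by
    intro n hn
    rw [Real.sqrt_le_left (by positivity)]
    have : (n:ℝ) ≤ 2 * N := by exact_mod_cast hn.le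
    nlinarith
  have bndl : ∀ n : ℕ, N ≤ n → √N ≤ √(n:ℝ) := by
    intro n hn
    exact Real.sqrt_le_sqrt (by exact_mod_cast hn)
  have fact : ∀ x ∈ S, x.1 < x.2 ∧ c * √N ≤ (x.2:ℝ) - x.1 ∧ (x.2:ℝ) - x.1 ≤ 5 * c * √N := by
    intro x hx
    obtain ⟨⟨a1, a2⟩, ⟨b1, b2⟩, h⟩ := hS x hx
    rw [abs_le] at h
    have sa := Real.sq_sqrt (Nat.cast_nonneg x.1 : (0:ℝ) ≤ x.1)
    have sb := Real.sq_sqrt (Nat.cast_nonneg x.2 : (0:ℝ) ≤ x.2)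
    have e : (x.2:ℝ) - x.1 = (√(x.2:ℝ) - √(x.1:ℝ)) * (√(x.2:ℝ) + √(x.1:ℝ)) := by linear_combination sa - sb
    have l1 : c / 2 ≤ √(x.2:ℝ) - √(x.1:ℝ) := by linarith [h.1]
    have l2 : √(x.2:ℝ) - √(x.1:ℝ) ≤ 3 / 2 * c := by linarith [h.2]
    have m1 := bnd _ a2
    have m2 := bnd _ b2
    have m3 := bndl _ a1
    have m4 := bndl _ b1
    have r1 : c * √N ≤ (x.2:ℝ) - x.1 := by
      rw [e]
      calc c * √N = (c/2) * (2 * √N) := by ring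
        _ ≤ _ := by gcongr; linarith; linarith
    have r2 : (x.2:ℝ) - x.1 ≤ 5 * c * √N := by
      rw [e]
      calc _ ≤ (3/2 * c) * (3 * √N) := by gcongr; linarith
        _ ≤ 5 * c * √N := by nlinarith [mul_pos hc0 (by linarith : 0 < √(N:ℝ))]
    refine ⟨?_, r1, r2⟩
    have : (0:ℝ) < (x.2:ℝ) - x.1 := lt_of_lt_of_le (by positivity) r1
    have : (x.1:ℝ) < x.2 := by linarith
    exact_mod_cast this
  have key : (S.card : ℝ) ≤ (2 * Δ / (c / (18 * N)) + 1) * ((Finset.Icc 1 ⌊5 * c * √N⌋₊).card : ℝ) := by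
    apply aux_fiber S _ (fun x => x.2 - x.1)
    · intro x hx
      obtain ⟨h1, h2, h3⟩ := fact x hx
      rw [Finset.mem_Icc]
      refine ⟨by omega, Nat.le_floor ?_⟩
      rw [Nat.cast_sub h1.le]; exact h3
    · intro t ht
      rw [Finset.mem_Icc] at ht
      apply aux_spaced _ (fun x => √(x.2:ℝ) - √(x.1:ℝ)) (c - Δ)
      · positivity
      · intro x hx
        rw [Finset.mem_filter] at hx
        obtain ⟨_, _, h⟩ := hS x hx.1
        rw [abs_le] at h
        constructor <;> linarith [h.1, h.2]
      · -- spacing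
        have wl : ∀ x ∈ S.filter (fun x => x.2 - x.1 = t), ∀ y ∈ S.filter (fun x => x.2 - x.1 = t), x.1 < y.1 →
            c / (18 * N) ≤ (√(x.2:ℝ) - √(x.1:ℝ)) - (√(y.2:ℝ) - √(y.1:ℝ)) := by
          intro x hx y hy hxy
          rw [Finset.mem_filter] at hx hy
          obtain ⟨h1, h2, h3⟩ := fact x hx.1
          obtain ⟨g1, g2, g3⟩ := fact y hy.1
          obtain ⟨⟨a1, a2⟩, ⟨b1, b2⟩, _⟩ := hS x hx.1
          obtain ⟨⟨c1, c2⟩, ⟨d1, d2⟩, _⟩ := hS y hy.1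
          have ht1 : (x.2:ℝ) - x.1 = t := by rw [← hx.2, Nat.cast_sub h1.le]
          have ht2 : (y.2:ℝ) - y.1 = t := by rw [← hy.2, Nat.cast_sub g1.le]
          have hxy2 : x.2 < y.2 := by have := hx.2; have := hy.2; omega
          have gap1 := aux_sqrt_gap N x.1 y.1 hN a2 c2 hxy
          have gap2 := aux_sqrt_gap N x.2 y.2 hN b2 d2 hxy2
          have sa := Real.sq_sqrt (Nat.cast_nonneg x.1 : (0:ℝ) ≤ x.1)
          have sb := Real.sq_sqrt (Nat.cast_nonneg x.2 : (0:ℝ) ≤ x.2)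
          have sc := Real.sq_sqrt (Nat.cast_nonneg y.1 : (0:ℝ) ≤ y.1)
          have sd := Real.sq_sqrt (Nat.cast_nonneg y.2 : (0:ℝ) ≤ y.2)
          have m1 := bnd _ a2
          have m2 := bnd _ b2
          have m3 := bndl _ a1
          have m4 := bndl _ b1
          have m5 := bnd _ c2
          have m6 := bnd _ d2
          have m7 := bndl _ c1
          have m8 := bndl _ d1
          set P := √(x.1:ℝ)
          set Q := √(x.2:ℝ)
          set P' := √(y.1:ℝ)
          set Q' := √(y.2:ℝ)
          have hPQ : 0 < Q + P := by linarith
          have hPQ' : 0 < Q' + P' := by linarith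
          have e1 : Q - P = t / (Q + P) := by
            rw [eq_div_iff hPQ.ne']; linear_combination sb - sa + ht1
          have e2 : Q' - P' = t / (Q' + P') := by
            rw [eq_div_iff hPQ'.ne']; linear_combination sd - sc + ht2
          have htc : c * √N ≤ t := by linarith
          rw [e1, e2]
          have e3 : (t:ℝ) / (Q + P) - t / (Q' + P') = t * ((Q' - Q) + (P' - P)) / ((Q + P) * (Q' + P')) := by
            field_simp; ring
          rw [e3, div_le_div_iff₀ (by positivity) (by positivity)]
          calc c * ((Q + P) * (Q' + P')) ≤ c * ((3 * √N) * (3 * √N)) := by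
                gcongr <;> linarith
            _ ≤ (c * √N) * (1 / (3 * √N) + 1 / (3 * √N)) * (18 * N) := by
                rw [show (c * √N) * (1 / (3 * √N) + 1 / (3 * √N)) * (18 * N) = 12 * c * N by field_simp; ring]
                nlinarith
            _ ≤ t * (Q' - Q + (P' - P)) * (18 * N) := by gcongr
        intro x hx y hy hne
        rcases lt_trichotomy x.1 y.1 with h | h | h
        · exact (wl x hx y hy h).trans (le_abs_self _)
        · exfalso
          rw [Finset.mem_filter] at hx hy
          have := (fact x hx.1).1
          have := (fact y hy.1).1
          have := hx.2
          have := hy.2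
          apply hne; ext
          · exact h
          · omega
        · rw [abs_sub_comm]
          exact (wl y hy x hx h).trans (le_abs_self _)
      · positivity
  rw [Nat.card_Icc, Nat.add_sub_cancel] at key
  calc _ ≤ _ := key
    _ ≤ (2 * Δ / (c / (18 * N)) + 1) * (5 * c * √N) := by
      gcongr; exact Nat.floor_le (by positivity)
    _ = 5 * c * √N + 180 * Δ * N * √N := by field_simp; ring
    _ ≤ _ := by gcongr; norm_num

lemma aux_F' (N : ℕ) (hN : 0 < N) (c Δ : ℝ) (hΔ : 0 < Δ) (hc : 2 * Δ ≤ |c|)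
    (S : Finset (ℕ × ℕ)) (hS : ∀ x ∈ S, (N ≤ x.1 ∧ x.1 < 2 * N) ∧ (N ≤ x.2 ∧ x.2 < 2 * N) ∧
      |√(x.2:ℝ) - √(x.1:ℝ) - c| ≤ Δ) :
    (S.card : ℝ) ≤ 5 * |c| * √N + 200 * Δ * N * √N := by
  by_cases h : 0 ≤ c
  · rw [abs_of_nonneg h] at *
    exact aux_F N hN c Δ hΔ hc S hS
  · push Not at h
    rw [abs_of_neg h] at *
    have : S.card = (S.map (Equiv.prodComm ℕ ℕ).toEmbedding).card := by simp
    rw [this]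
    apply aux_F N hN (-c) Δ hΔ hc
    intro x hx
    rw [Finset.mem_map_equiv] at hx
    obtain ⟨h1, h2, h3⟩ := hS _ hx
    refine ⟨h2, h1, ?_⟩
    rw [← abs_neg]
    convert h3 using 2
    simp; ring

/-- restricted energy -/
lemma aux_E1 (N P s : ℕ) (hN : 0 < N) (hP : 0 < P) (hPN : P ≤ N) (hs : 0 < s) (hs2 : s * s ≤ P)
    (Δ : ℝ) (hΔ : 0 < Δ) (hΔ1 : 8 * Δ * √N < 1)
    (a b : ℤ) (ha : a = 1 ∨ a = -1) (hb : b = 1 ∨ b = -1)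
    (S : Finset ((ℕ × ℕ) × (ℕ × ℕ)))
    (hS : ∀ z ∈ S, ((N ≤ z.1.1 ∧ z.1.1 < 2 * N) ∧ (P ≤ z.1.2 ∧ z.1.2 < 2 * P)) ∧
      ((N ≤ z.2.1 ∧ z.2.1 < 2 * N) ∧ (P ≤ z.2.2 ∧ z.2.2 < 2 * P)) ∧ z.1.2 / s = z.2.2 / s ∧
      |((a:ℝ) * √z.1.1 + b * √z.1.2) - (a * √z.2.1 + b * √z.2.2)| ≤ Δ) :
    (S.card : ℝ) ≤ 4 * (N * P) + 200 * Δ * (P * √P) * (N * √N) := by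
  have hN' : (1:ℝ) ≤ N := by exact_mod_cast hN
  have hsN : (1:ℝ) ≤ √N := Real.one_le_sqrt.mpr hN'
  have sqN := Real.sq_sqrt (Nat.cast_nonneg N : (0:ℝ) ≤ N)
  have hP' : (1:ℝ) ≤ P := by exact_mod_cast hP
  have hsP : (1:ℝ) ≤ √P := Real.one_le_sqrt.mpr hP'
  have sqP := Real.sq_sqrt (Nat.cast_nonneg P : (0:ℝ) ≤ P)
  have hPNs : √(P:ℝ) ≤ √N := Real.sqrt_le_sqrt (by exact_mod_cast hPN)
  have hss : (s:ℝ) ≤ √P := by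
    apply Real.le_sqrt_of_sq_le; rw [sq]; exact_mod_cast hs2
  obtain ⟨ta, ua⟩ := aux_sgn a ha
  obtain ⟨tb, ub⟩ := aux_sgn b hb
  have hform : ∀ z ∈ S, |√(z.2.1:ℝ) - √(z.1.1:ℝ) - (a * b) * (√(z.1.2:ℝ) - √(z.2.2:ℝ))| ≤ Δ := by
    intro z hz
    obtain ⟨_, _, _, h⟩ := hS z hz
    have : |√(z.2.1:ℝ) - √(z.1.1:ℝ) - (a * b) * (√(z.1.2:ℝ) - √(z.2.2:ℝ))| = |(a:ℝ)| * |√(z.2.1:ℝ) - √(z.1.1:ℝ) - (a * b) * (√(z.1.2:ℝ) - √(z.2.2:ℝ))| := by rw [ua, one_mul]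
    rw [this, ← abs_mul, ← abs_neg]
    refine le_of_eq_of_le (congrArg abs ?_) h
    linear_combination ((b:ℝ) * (√(z.1.2:ℝ) - √(z.2.2:ℝ))) * ta
  rw [← Finset.card_filter_add_card_filter_not (fun z : (ℕ × ℕ) × (ℕ × ℕ) => z.1.2 = z.2.2)]
  push_cast
  have c1 : (((S.filter (fun z => z.1.2 = z.2.2)).card : ℕ) : ℝ) ≤ N * P := by
    have : (S.filter (fun z => z.1.2 = z.2.2)).card ≤ ((Finset.Ico N (2*N)) ×ˢ (Finset.Ico P (2*P))).card := by
      apply Finset.card_le_card_of_injOn (fun z => z.1)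
      · intro z hz
        simp only [Finset.mem_coe, Finset.mem_filter] at hz
        obtain ⟨h, _, _, _⟩ := hS z hz.1
        simp only [Finset.coe_product, Set.mem_prod, Finset.mem_coe, Finset.mem_Ico]
        exact h
      · intro z hz w hw hzw
        have eqq : ∀ z ∈ S.filter (fun z => z.1.2 = z.2.2), z.1.1 = z.2.1 := by
          intro z hz
          simp only [Finset.mem_filter] at hz
          have h := hform z hz.1
          obtain ⟨h1, h2, h3, _⟩ := hS z hz.1
          rw [hz.2, sub_self, mul_zero, sub_zero, abs_le] at h
          have gapc : Δ < 1 / (3 * √N) := by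
            rw [lt_div_iff₀ (by positivity)]; nlinarith
          rcases lt_trichotomy z.1.1 z.2.1 with g | g | g
          · have := aux_sqrt_gap N _ _ hN h1.1.2 h2.1.2 g
            linarith [h.2]
          · exact g
          · have := aux_sqrt_gap N _ _ hN h2.1.2 h1.1.2 g
            linarith [h.1]
        have e1 := eqq z hz
        have e2 := eqq w hw
        simp only [Finset.mem_coe, Finset.mem_filter] at hz hw
        obtain ⟨⟨z1, z2⟩, ⟨z3, z4⟩⟩ := z
        obtain ⟨⟨w1, w2⟩, ⟨w3, w4⟩⟩ := w
        simp only [Prod.mk.injEq] at *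
        omega
    rw [Finset.card_product, Nat.card_Ico, Nat.card_Ico] at this
    have e1 : 2 * N - N = N := by omega
    have e2 : 2 * P - P = P := by omega
    rw [e1, e2] at this
    exact_mod_cast this
  have c2 : (((S.filter (fun z => ¬ z.1.2 = z.2.2)).card : ℕ) : ℝ) ≤ (3 * √N + 200 * Δ * N * √N) * ((((Finset.Ico P (2*P)) ×ˢ (Finset.Ico P (2*P))).filter (fun q => q.1 / s = q.2 / s ∧ q.1 ≠ q.2)).card : ℝ) := by
    apply aux_fiber _ _ (fun z => (z.1.2, z.2.2))
    · intro z hz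
      simp only [Finset.mem_filter] at hz
      obtain ⟨h1, h2, h3, _⟩ := hS z hz.1
      simp only [Finset.mem_filter, Finset.mem_product, Finset.mem_Ico]
      exact ⟨⟨h1.2, h2.2⟩, h3, hz.2⟩
    · rintro ⟨p, q⟩ hpq
      simp only [Finset.mem_filter, Finset.mem_product, Finset.mem_Ico] at hpq
      obtain ⟨⟨⟨p1, p2⟩, ⟨q1, q2⟩⟩, hdiv, hne⟩ := hpq
      set c : ℝ := (a * b) * (√(p:ℝ) - √(q:ℝ)) with hc
      have hcabs : |c| = |√(p:ℝ) - √(q:ℝ)| := by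
        rw [hc, abs_mul, abs_mul, ua, ub]; ring
      have hclow : 2 * Δ ≤ |c| := by
        have g1 : 2 * Δ ≤ 1 / (3 * √P) := by
          rw [le_div_iff₀ (by positivity)]
          have : Δ * √P ≤ Δ * √N := by gcongr
          linarith
        rw [hcabs]
        rcases lt_or_gt_of_ne hne with g | g
        · have := aux_sqrt_gap P _ _ hP p2 q2 g
          rw [abs_sub_comm]
          exact (g1.trans this).trans (le_abs_self _)
        · have := aux_sqrt_gap P _ _ hP q2 p2 g
          exact (g1.trans this).trans (le_abs_self _)
      have hcup : |c| ≤ 1/2 := by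
        rw [hcabs]
        have hd : |(p:ℝ) - q| ≤ s := by
          have h1 := Nat.div_add_mod p s
          have h2 := Nat.div_add_mod q s
          have h3 := Nat.mod_lt p hs
          have h4 := Nat.mod_lt q hs
          rw [hdiv] at h1
          have : |(p:ℤ) - q| ≤ s := by rw [abs_le]; constructor <;> omega
          exact_mod_cast this
        have sp := Real.sq_sqrt (Nat.cast_nonneg p : (0:ℝ) ≤ p)
        have sq' := Real.sq_sqrt (Nat.cast_nonneg q : (0:ℝ) ≤ q)
        have e : (p:ℝ) - q = (√(p:ℝ) - √(q:ℝ)) * (√(p:ℝ) + √(q:ℝ)) := by linear_combination sq' - sp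
        rw [e, abs_mul, abs_of_nonneg (by positivity : 0 ≤ √(p:ℝ) + √(q:ℝ))] at hd
        have l1 : √(P:ℝ) ≤ √(p:ℝ) := Real.sqrt_le_sqrt (by exact_mod_cast p1)
        have l2 : √(P:ℝ) ≤ √(q:ℝ) := Real.sqrt_le_sqrt (by exact_mod_cast q1)
        have h3 : |√(p:ℝ) - √(q:ℝ)| * (2 * √P) ≤ √P := by
          calc _ ≤ |√(p:ℝ) - √(q:ℝ)| * (√(p:ℝ) + √(q:ℝ)) := by gcongr; linarith
            _ ≤ _ := hd.trans hss
        nlinarith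
      set F := (S.filter (fun z => ¬ z.1.2 = z.2.2)).filter (fun z => (z.1.2, z.2.2) = (p, q)) with hF
      have hinj : F.card = (F.image (fun z => (z.1.1, z.2.1))).card := by
        symm; apply Finset.card_image_of_injOn
        intro z hz w hw hzw
        simp only [hF, Finset.mem_coe, Finset.mem_filter] at hz hw
        obtain ⟨⟨z1, z2⟩, ⟨z3, z4⟩⟩ := z
        obtain ⟨⟨w1, w2⟩, ⟨w3, w4⟩⟩ := w
        simp only [Prod.mk.injEq] at *
        omega
      rw [hinj]
      refine (aux_F' N hN c Δ hΔ hclow _ ?_).trans ?_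
      · intro x hx
        obtain ⟨z, hz, rfl⟩ := Finset.mem_image.mp hx
        simp only [hF, Finset.mem_filter, Prod.mk.injEq] at hz
        obtain ⟨h1, h2, h3, _⟩ := hS z hz.1.1
        have h := hform z hz.1.1
        rw [hz.2.1, hz.2.2] at h
        exact ⟨h1.1, h2.1, h⟩
      · have : 5 * |c| * √N ≤ 3 * √N := by gcongr; linarith
        linarith
  have c3 : ((((Finset.Ico P (2*P)) ×ˢ (Finset.Ico P (2*P))).filter (fun q => q.1 / s = q.2 / s ∧ q.1 ≠ q.2)).card : ℝ) ≤ s * P := by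
    have : ((((Finset.Ico P (2*P)) ×ˢ (Finset.Ico P (2*P))).filter (fun q => q.1 / s = q.2 / s ∧ q.1 ≠ q.2)).card : ℝ) ≤ s * ((Finset.Ico P (2*P)).card : ℝ) := by
      apply aux_fiber _ _ (fun q => q.1)
      · intro q hq
        simp only [Finset.mem_filter, Finset.mem_product] at hq
        exact hq.1.1
      · intro p hp
        have : (((((Finset.Ico P (2*P)) ×ˢ (Finset.Ico P (2*P))).filter (fun q => q.1 / s = q.2 / s ∧ q.1 ≠ q.2))).filter (fun q => q.1 = p)).card ≤ (Finset.range s).card := by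
          apply Finset.card_le_card_of_injOn (fun q => q.2 % s)
          · intro q hq
            simp only [Finset.coe_range, Set.mem_Iio]
            exact Nat.mod_lt _ hs
          · intro q hq r hr hqr
            simp only [Finset.mem_coe, Finset.mem_filter] at hq hr
            have h1 := Nat.div_add_mod q.2 s
            have h2 := Nat.div_add_mod r.2 s
            have e1 : q.1 = r.1 := by rw [hq.2, hr.2]
            have e2 : q.2 / s = r.2 / s := by rw [← hq.1.2.1, ← hr.1.2.1, e1]
            simp only at hqr
            rw [e2, hqr] at h1
            ext
            · exact e1
            · omega
        rw [Finset.card_range] at this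
        exact_mod_cast this
    rw [Nat.card_Ico] at this
    have e2 : 2 * P - P = P := by omega
    rwa [e2] at this
  have c4 : (3 * √N + 200 * Δ * N * √N) * ((((Finset.Ico P (2*P)) ×ˢ (Finset.Ico P (2*P))).filter (fun q => q.1 / s = q.2 / s ∧ q.1 ≠ q.2)).card : ℝ) ≤ (3 * √N + 200 * Δ * N * √N) * (√P * P) := by
    gcongr
    exact c3.trans (by gcongr)
  have c5 : √(N:ℝ) * (√P * P) ≤ N * P := by
    calc _ ≤ √(N:ℝ) * (√N * P) := by gcongr
      _ = (√(N:ℝ))^2 * P := by ring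
      _ = _ := by rw [sqN]
  nlinarith

lemma aux_E (N P : ℕ) (hN : 0 < N) (hP : 0 < P) (hPN : P ≤ N)
    (Δ : ℝ) (hΔ : 0 < Δ) (hΔ1 : 8 * Δ * √N < 1)
    (a b : ℤ) (ha : a = 1 ∨ a = -1) (hb : b = 1 ∨ b = -1) (f : ℕ × ℕ → ℤ)
    (hf : ∀ x y, f x = f y → |((a:ℝ) * √x.1 + b * √x.2) - (a * √y.1 + b * √y.2)| ≤ Δ) :
    (((((Finset.Ico N (2*N)) ×ˢ (Finset.Ico P (2*P))) ×ˢ ((Finset.Ico N (2*N)) ×ˢ (Finset.Ico P (2*P)))).filter (fun z => f z.1 = f z.2)).card : ℝ)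
     ≤ 20 * (N * (P * √P)) + 1000 * Δ * P^2 * (N * √N) := by
  set s := Nat.sqrt P with hs
  have hs0 : 0 < s := Nat.sqrt_pos.mpr hP
  have hs2 : s * s ≤ P := Nat.sqrt_le P
  have hs3 : P < (s + 1) * (s + 1) := Nat.lt_succ_sqrt P
  have hP' : (1:ℝ) ≤ P := by exact_mod_cast hP
  have hsP : (1:ℝ) ≤ √P := Real.one_le_sqrt.mpr hP'
  have sqP := Real.sq_sqrt (Nat.cast_nonneg P : (0:ℝ) ≤ P)
  have h1 := aux_block ((Finset.Ico N (2*N)) ×ˢ (Finset.Ico P (2*P))) f (fun x => x.2 / s) (2 * P / s + 1) (by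
    intro x hx
    simp only [Finset.mem_product, Finset.mem_Ico] at hx
    exact Nat.lt_succ_of_le (Nat.div_le_div_right hx.2.2.le))
  have h2 := aux_E1 N P s hN hP hPN hs0 hs2 Δ hΔ hΔ1 a b ha hb
    (((((Finset.Ico N (2*N)) ×ˢ (Finset.Ico P (2*P))) ×ˢ ((Finset.Ico N (2*N)) ×ˢ (Finset.Ico P (2*P)))).filter (fun z => f z.1 = f z.2 ∧ z.1.2 / s = z.2.2 / s))) (by
    intro z hz
    simp only [Finset.mem_filter, Finset.mem_product, Finset.mem_Ico] at hz
    exact ⟨hz.1.1, hz.1.2, hz.2.2, hf _ _ hz.2.1⟩)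
  have hG : ((2 * P / s + 1 : ℕ) : ℝ) ≤ 5 * √P := by
    have hsr : √(P:ℝ) ≤ 2 * s := by
      rw [Real.sqrt_le_left (by positivity)]
      have : P ≤ (2 * s)^2 := by nlinarith
      exact_mod_cast this
    have : ((2 * P / s : ℕ) : ℝ) ≤ 4 * √P := by
      refine Nat.cast_div_le.trans ?_
      rw [div_le_iff₀ (by exact_mod_cast hs0)]
      push_cast
      nlinarith
    push_cast at this ⊢
    linarith
  have h1' : (((((Finset.Ico N (2*N)) ×ˢ (Finset.Ico P (2*P))) ×ˢ ((Finset.Ico N (2*N)) ×ˢ (Finset.Ico P (2*P)))).filter (fun z => f z.1 = f z.2)).card : ℝ) ≤ ((2 * P / s + 1 : ℕ) : ℝ) * (((((Finset.Ico N (2*N)) ×ˢ (Finset.Ico P (2*P))) ×ˢ ((Finset.Ico N (2*N)) ×ˢ (Finset.Ico P (2*P)))).filter (fun z => f z.1 = f z.2 ∧ z.1.2 / s = z.2.2 / s)).card : ℝ) := by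
    exact_mod_cast h1
  calc _ ≤ _ := h1'
    _ ≤ (5 * √P) * (4 * (N * P) + 200 * Δ * (P * √P) * (N * √N)) := by gcongr
    _ = 20 * (N * (P * √P)) + 1000 * Δ * ((√P)^2 * P) * (N * √N) := by ring
    _ = _ := by rw [sqP]; ring

set_option maxHeartbeats 1000000 in
lemma aux_2a (s1 s2 s3 s4 : ℤ) (h1 : s1 = 1 ∨ s1 = -1) (h2 : s2 = 1 ∨ s2 = -1)
    (h3 : s3 = 1 ∨ s3 = -1) (h4 : s4 = 1 ∨ s4 = -1) (N1 N2 N3 N4 : ℕ) (p1 : 0 < N1) (p2 : 0 < N2)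
    (p3 : 0 < N3) (p4 : 0 < N4) (l2 : N2 ≤ N1) (l3 : N3 ≤ N1) (l4 : N4 ≤ N2)
    (Δ : ℝ) (hΔ : 0 < Δ) (hΔ1 : 8 * Δ * √N1 < 1)
    (S : Finset (ℕ × ℕ × ℕ × ℕ)) (hS : ∀ x ∈ S, QP s1 s2 s3 s4 N1 N2 N3 N4 Δ x) :
    (S.card : ℝ)^2 ≤ 9 * ((20 * (N1 * (N3 * √N3)) + 1000 * Δ * N3^2 * (N1 * √N1)) *
      (20 * (N2 * (N4 * √N4)) + 1000 * Δ * N4^2 * (N2 * √N2))) := by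
  have hcell : ∀ u v : ℝ, ⌊u / Δ⌋ = ⌊v / Δ⌋ → |u - v| ≤ Δ := by
    intro u v h
    have := Int.abs_sub_lt_one_of_floor_eq_floor h
    rw [← sub_div, abs_div, abs_of_pos hΔ, div_lt_one hΔ] at this
    exact this.le
  set f : ℕ × ℕ → ℤ := fun x => ⌊((s1:ℝ) * √x.1 + s3 * √x.2) / Δ⌋ with hf
  set g : ℕ × ℕ → ℤ := fun x => ⌊(-((s2:ℝ) * √x.1 + s4 * √x.2)) / Δ⌋ with hg
  have hΔ2 : 8 * Δ * √N2 < 1 := by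
    have : √(N2:ℝ) ≤ √N1 := Real.sqrt_le_sqrt (by exact_mod_cast l2)
    have : Δ * √(N2:ℝ) ≤ Δ * √N1 := by gcongr
    linarith
  have E1 := aux_E N1 N3 p1 p3 l3 Δ hΔ hΔ1 s1 s3 h1 h3 f (fun x y hxy => hcell _ _ hxy)
  have E2 := aux_E N2 N4 p2 p4 l4 Δ hΔ hΔ2 s2 s4 h2 h4 g (fun x y hxy => by
    have := hcell _ _ hxy
    rw [← abs_neg]; convert this using 2; ring)
  set X := (Finset.Ico N1 (2*N1)) ×ˢ (Finset.Ico N3 (2*N3)) with hX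
  set Y := (Finset.Ico N2 (2*N2)) ×ˢ (Finset.Ico N4 (2*N4)) with hY
  set R := (20 * (N1 * (N3 * √N3)) + 1000 * Δ * N3^2 * (N1 * √N1)) *
      (20 * (N2 * (N4 * √N4)) + 1000 * Δ * N4^2 * (N2 * √N2)) with hR
  have hR0 : 0 ≤ R := by positivity
  have hsh : ∀ d : ℤ, ((((X ×ˢ Y).filter (fun z => f z.1 = g z.2 + d)).card : ℝ))^2 ≤ R := by
    intro d
    have := aux_CS X Y f (fun y => g y + d)
    simp only [add_left_inj] at this
    refine this.trans ?_
    rw [hR]; gcongr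
  have hcard : S.card ≤ ∑ d ∈ ({-1, 0, 1} : Finset ℤ), ((X ×ˢ Y).filter (fun z => f z.1 = g z.2 + d)).card := by
    refine le_trans ?_ Finset.card_biUnion_le
    apply Finset.card_le_card_of_injOn (fun x => ((x.1, x.2.2.1), (x.2.1, x.2.2.2)))
    · intro x hx
      obtain ⟨a1, a2, a3, a4, _, a6⟩ := hS x hx
      simp only [Finset.coe_biUnion, Set.mem_iUnion, Finset.mem_coe, Finset.mem_filter, exists_prop]
      refine ⟨f (x.1, x.2.2.1) - g (x.2.1, x.2.2.2), ?_, ?_, (add_sub_cancel _ _).symm⟩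
      · have hd : |((s1:ℝ) * √x.1 + s3 * √x.2.2.1) / Δ - (-((s2:ℝ) * √x.2.1 + s4 * √x.2.2.2)) / Δ| ≤ 1 := by
          rw [← sub_div, abs_div, abs_of_pos hΔ, div_le_one hΔ]
          simp only [al] at a6
          refine le_of_eq_of_le (congrArg abs ?_) a6; ring
        rw [abs_le] at hd
        have u1 := Int.floor_le (((s1:ℝ) * √x.1 + s3 * √x.2.2.1) / Δ)
        have u2 := Int.lt_floor_add_one (((s1:ℝ) * √x.1 + s3 * √x.2.2.1) / Δ)
        have v1 := Int.floor_le ((-((s2:ℝ) * √x.2.1 + s4 * √x.2.2.2)) / Δ)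
        have v2 := Int.lt_floor_add_one ((-((s2:ℝ) * √x.2.1 + s4 * √x.2.2.2)) / Δ)
        simp only [hf, hg]
        set p := ⌊((s1:ℝ) * √x.1 + s3 * √x.2.2.1) / Δ⌋
        set q := ⌊(-((s2:ℝ) * √x.2.1 + s4 * √x.2.2.2)) / Δ⌋
        have w1 : p < q + 2 := by
          have : (p:ℝ) < q + 2 := by linarith [hd.2]
          exact_mod_cast this
        have w2 : q < p + 2 := by
          have : (q:ℝ) < p + 2 := by linarith [hd.1]
          exact_mod_cast this
        simp only [Finset.mem_insert, Finset.mem_singleton]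
        omega
      · simp only [hX, hY, Finset.mem_product, Finset.mem_Ico]
        exact ⟨⟨a1, a3⟩, ⟨a2, a4⟩⟩
    · rintro ⟨x1, x2, x3, x4⟩ hx ⟨y1, y2, y3, y4⟩ hy hxy
      simp only [Prod.mk.injEq] at hxy ⊢
      tauto
  have hsq : (S.card : ℝ)^2 ≤ 9 * R := by
    have e : ∑ d ∈ ({-1, 0, 1} : Finset ℤ), ((X ×ˢ Y).filter (fun z => f z.1 = g z.2 + d)).card =
      ((X ×ˢ Y).filter (fun z => f z.1 = g z.2 + (-1))).card + (((X ×ˢ Y).filter (fun z => f z.1 = g z.2 + 0)).card + ((X ×ˢ Y).filter (fun z => f z.1 = g z.2 + 1)).card) := by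
      rw [Finset.sum_insert (by decide), Finset.sum_insert (by decide), Finset.sum_singleton]
    rw [e] at hcard
    have r1 := Real.abs_le_sqrt (hsh (-1))
    have r2 := Real.abs_le_sqrt (hsh 0)
    have r3 := Real.abs_le_sqrt (hsh 1)
    rw [abs_of_nonneg (by positivity)] at r1 r2 r3
    have hc' : (S.card : ℝ) ≤ 3 * √R := by
      have : (S.card : ℝ) ≤ (((X ×ˢ Y).filter (fun z => f z.1 = g z.2 + (-1))).card : ℝ) + ((((X ×ˢ Y).filter (fun z => f z.1 = g z.2 + 0)).card : ℝ) + (((X ×ˢ Y).filter (fun z => f z.1 = g z.2 + 1)).card : ℝ)) := by exact_mod_cast hcard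
      linarith
    calc _ ≤ (3 * √R)^2 := by gcongr
      _ = 9 * R := by rw [mul_pow, Real.sq_sqrt hR0]; norm_num
  exact hsq

lemma aux_case1 (s1 s2 s3 s4 : ℤ) (h1 : s1 = 1 ∨ s1 = -1) (N1 N2 N3 N4 : ℕ) (p1 : 0 < N1)
    (Δ : ℝ) (hΔ : 0 < Δ) (hΔ1 : 1 ≤ 8 * Δ * √N1)
    (S : Finset (ℕ × ℕ × ℕ × ℕ)) (hS : ∀ x ∈ S, QP s1 s2 s3 s4 N1 N2 N3 N4 Δ x) :
    (S.card : ℝ) ≤ 14 * Δ * √N1 * (N2 * N3 * N4) := by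
  have hN' : (1:ℝ) ≤ N1 := by exact_mod_cast p1
  have hsN : (1:ℝ) ≤ √N1 := Real.one_le_sqrt.mpr hN'
  have key : (S.card : ℝ) ≤ (2 * Δ / (1 / (3 * √N1)) + 1) * (((Finset.Ico N2 (2*N2)) ×ˢ ((Finset.Ico N3 (2*N3)) ×ˢ (Finset.Ico N4 (2*N4)))).card : ℝ) := by
    apply aux_fiber S _ (fun x => x.2)
    · intro x hx
      obtain ⟨a1, a2, a3, a4, _, a6⟩ := hS x hx
      simp only [Finset.mem_product, Finset.mem_Ico]
      exact ⟨a2, a3, a4⟩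
    · intro y hy
      apply aux_spaced _ (fun x => (s1:ℝ) * √x.1) (-(s2 * √y.1 + s3 * √y.2.1 + s4 * √y.2.2) - Δ)
      · positivity
      · intro x hx
        rw [Finset.mem_filter] at hx
        obtain ⟨a1, a2, a3, a4, _, a6⟩ := hS x hx.1
        simp only [al, hx.2] at a6
        rw [abs_le] at a6
        constructor <;> linarith [a6.1, a6.2]
      · intro x hx z hz hne
        rw [Finset.mem_filter] at hx hz
        obtain ⟨⟨a1, a2⟩, _⟩ := hS x hx.1
        obtain ⟨⟨b1, b2⟩, _⟩ := hS z hz.1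
        have hn : x.1 ≠ z.1 := by
          intro h; apply hne; ext1
          · exact h
          · rw [hx.2, hz.2]
        rw [← mul_sub, abs_mul, (aux_sgn s1 h1).2, one_mul]
        rcases lt_or_gt_of_ne hn with g | g
        · rw [abs_sub_comm]; exact (aux_sqrt_gap N1 _ _ p1 a2 b2 g).trans (le_abs_self _)
        · exact (aux_sqrt_gap N1 _ _ p1 b2 a2 g).trans (le_abs_self _)
      · linarith
  have e : (((Finset.Ico N2 (2*N2)) ×ˢ ((Finset.Ico N3 (2*N3)) ×ˢ (Finset.Ico N4 (2*N4)))).card : ℝ) = N2 * N3 * N4 := by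
    rw [Finset.card_product, Finset.card_product, Nat.card_Ico, Nat.card_Ico, Nat.card_Ico]
    rw [show 2 * N2 - N2 = N2 by omega, show 2 * N3 - N3 = N3 by omega, show 2 * N4 - N4 = N4 by omega]
    push_cast; ring
  rw [e] at key
  refine key.trans ?_
  have : 2 * Δ / (1 / (3 * √N1)) + 1 = 6 * Δ * √N1 + 1 := by field_simp; ring
  rw [this]
  gcongr
  linarith

lemma aux_close (s1 s2 s3 s4 : ℤ) (h1 : s1 = 1 ∨ s1 = -1) (h2 : s2 = 1 ∨ s2 = -1)
    (h3 : s3 = 1 ∨ s3 = -1) (h4 : s4 = 1 ∨ s4 = -1) (N1 N2 N3 N4 : ℕ) (p1 : 0 < N1) (p2 : 0 < N2)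
    (l3 : N3 ≤ N2) (l4 : N4 ≤ N2)
    (Δ : ℝ) (hΔ : 0 < Δ) (hΔ1 : 8 * Δ * √N1 < 1)
    (x : ℕ × ℕ × ℕ × ℕ) (hx : QP s1 s2 s3 s4 N1 N2 N3 N4 Δ x) : (N1:ℝ) ≤ 25 * N2 := by
  obtain ⟨⟨a1, a1'⟩, ⟨a2, a2'⟩, ⟨a3, a3'⟩, ⟨a4, a4'⟩, _, a6⟩ := hx
  have hN' : (1:ℝ) ≤ N1 := by exact_mod_cast p1
  have hsN : (1:ℝ) ≤ √N1 := Real.one_le_sqrt.mpr hN'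
  have hN2 : (1:ℝ) ≤ N2 := by exact_mod_cast p2
  have hsN2 : (1:ℝ) ≤ √N2 := Real.one_le_sqrt.mpr hN2
  have sqN := Real.sq_sqrt (Nat.cast_nonneg N1 : (0:ℝ) ≤ N1)
  have sqN2 := Real.sq_sqrt (Nat.cast_nonneg N2 : (0:ℝ) ≤ N2)
  have bnd : ∀ n : ℕ, n < 2 * N2 → √(n:ℝ) ≤ 3 / 2 * √N2 := by
    intro n hn
    rw [Real.sqrt_le_left (by positivity)]
    have : (n:ℝ) ≤ 2 * N2 := by exact_mod_cast hn.le
    nlinarith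
  have b2 := bnd _ a2'
  have b3 := bnd x.2.2.1 (by omega)
  have b4 := bnd x.2.2.2 (by omega)
  have b1 : √(N1:ℝ) ≤ √(x.1:ℝ) := Real.sqrt_le_sqrt (by exact_mod_cast a1)
  have hΔ2 : Δ ≤ 1/8 := by nlinarith
  have r1 := Real.sqrt_nonneg (x.1:ℝ)
  have r2 := Real.sqrt_nonneg (x.2.1:ℝ)
  have r3 := Real.sqrt_nonneg (x.2.2.1:ℝ)
  have r4 := Real.sqrt_nonneg (x.2.2.2:ℝ)
  simp only [al] at a6
  rw [abs_le] at a6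
  have : √(x.1:ℝ) ≤ √(x.2.1:ℝ) + √(x.2.2.1:ℝ) + √(x.2.2.2:ℝ) + Δ := by
    obtain ⟨a6, a7⟩ := a6
    rcases h1 with rfl | rfl <;> rcases h2 with rfl | rfl <;> rcases h3 with rfl | rfl <;>
      rcases h4 with rfl | rfl <;> push_cast at a6 a7 <;> linarith
  have h5 : √(N1:ℝ) ≤ 5 * √N2 := by linarith
  have := pow_le_pow_left₀ (by positivity) h5 2
  rw [sqN, mul_pow, sqN2] at this
  linarith

lemma aux_q (N : ℕ) (hN : 0 < N) : ∃ q : ℝ, 1 ≤ q ∧ (N:ℝ) = q^4 ∧ √(N:ℝ) = q^2 ∧ (N:ℝ)^((3:ℝ)/4) = q^3 ∧ (N:ℝ)^((7:ℝ)/4) = q^7 := by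
  have hN' : (1:ℝ) ≤ N := by exact_mod_cast hN
  have h0 : (0:ℝ) ≤ N := by linarith
  refine ⟨(N:ℝ)^((1:ℝ)/4), Real.one_le_rpow hN' (by norm_num), ?_, ?_, ?_, ?_⟩
  · rw [← Real.rpow_natCast, ← Real.rpow_mul h0]; norm_num
  · rw [← Real.rpow_natCast, ← Real.rpow_mul h0, Real.sqrt_eq_rpow]; norm_num
  · rw [← Real.rpow_natCast, ← Real.rpow_mul h0]; norm_num
  · rw [← Real.rpow_natCast, ← Real.rpow_mul h0]; norm_num

lemma aux_pos4 {a b : ℝ} (ha : 0 ≤ a) (hb : 0 ≤ b) (n : ℕ) (hn : n ≠ 0) (h : a^n ≤ b^n) : a ≤ b :=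
  (pow_le_pow_iff_left₀ ha hb hn).mp h

set_option maxHeartbeats 2000000 in
set_option maxRecDepth 4000 in
lemma aux_sorted (ε : ℝ) (hε : 0 < ε) : ∃ C : ℝ, 1 ≤ C ∧ ∀ T : ℝ, 10 ≤ T → ∀ s1 s2 s3 s4 : ℤ,
    (s1 = 1 ∨ s1 = -1) → (s2 = 1 ∨ s2 = -1) → (s3 = 1 ∨ s3 = -1) → (s4 = 1 ∨ s4 = -1) →
    ∀ N1 N2 N3 N4 : ℕ, 0 < N1 → 0 < N2 → 0 < N3 → 0 < N4 → N2 ≤ N1 → N3 ≤ N2 → N4 ≤ N2 →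
    (N1:ℝ) ≤ T^((3:ℝ)/4) → ∀ Δ : ℝ, T^(-(1:ℝ)/2) ≤ Δ →
    ∀ S : Finset (ℕ × ℕ × ℕ × ℕ), (∀ x ∈ S, QP s1 s2 s3 s4 N1 N2 N3 N4 Δ x) →
    (S.card : ℝ) ≤ C * T^((3:ℝ)/8 + ε) * Δ * ((N1:ℝ) * N2 * N3 * N4)^((3:ℝ)/4) := by
  obtain ⟨C1, hC1, hdiv⟩ := aux_div (ε/6) (by linarith)
  obtain ⟨C2, hC2, hlog⟩ := aux_log_le (ε/4) (by linarith)
  set K := 10000000 * (C1 * 64^(ε/6))^3 * (C2 * 8^(ε/4))^2 with hK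
  have k1 : (1:ℝ) ≤ C1 * 64^(ε/6) := by
    have : (1:ℝ) ≤ 64^(ε/6) := Real.one_le_rpow (by norm_num) (by linarith)
    nlinarith
  have k2 : (1:ℝ) ≤ C2 * 8^(ε/4) := by
    have : (1:ℝ) ≤ 8^(ε/4) := Real.one_le_rpow (by norm_num) (by linarith)
    nlinarith
  have hK1 : 10000000 ≤ K := by
    rw [hK]
    have := one_le_pow₀ k1 (n := 3)
    have := one_le_pow₀ k2 (n := 2)
    calc (10000000:ℝ) = 10000000 * 1 * 1 := by norm_num
      _ ≤ _ := by gcongr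
  refine ⟨32 * K, by linarith, ?_⟩
  intro T hT s1 s2 s3 s4 h1 h2 h3 h4 N1 N2 N3 N4 p1 p2 p3 p4 l2 l3 l4 hNT Δ hΔ S hS
  have hT0 : 0 < T := by linarith
  obtain ⟨t, ht⟩ : ∃ t, t = T^((1:ℝ)/8) := ⟨_, rfl⟩
  have ht1 : 1 ≤ t := by rw [ht]; exact Real.one_le_rpow (by linarith) (by norm_num)
  have e3 : T^((3:ℝ)/8) = t^3 := by
    rw [ht, ← Real.rpow_natCast, ← Real.rpow_mul hT0.le]; norm_num
  have e6 : T^((3:ℝ)/4) = t^6 := by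
    rw [ht, ← Real.rpow_natCast, ← Real.rpow_mul hT0.le]; norm_num
  have em4 : T^(-(1:ℝ)/2) = (t^4)⁻¹ := by
    rw [ht, ← Real.rpow_natCast, ← Real.rpow_mul hT0.le, ← Real.rpow_neg hT0.le]; norm_num
  have hTt : T = t^8 := by
    rw [ht, ← Real.rpow_natCast, ← Real.rpow_mul hT0.le]; norm_num
  have hTε : 1 ≤ T^ε := Real.one_le_rpow (by linarith) hε.le
  rw [Real.rpow_add hT0, e3]
  rw [e6] at hNT
  rw [em4] at hΔ
  have hΔ0 : 0 < Δ := lt_of_lt_of_le (by positivity) hΔ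
  have hΔt : 1 ≤ Δ * t^4 := by
    rw [inv_le_iff_one_le_mul₀ (by positivity)] at hΔ; linarith
  obtain ⟨q1, hq1, f1, g1, i1, j1⟩ := aux_q N1 p1
  obtain ⟨q2, hq2, f2, g2, i2, j2⟩ := aux_q N2 p2
  obtain ⟨q3, hq3, f3, g3, i3, j3⟩ := aux_q N3 p3
  obtain ⟨q4, hq4, f4, g4, i4, j4⟩ := aux_q N4 p4
  have l2' : q2 ≤ q1 := by
    apply aux_pos4 (by linarith) (by linarith) 4 (by norm_num); rw [← f1, ← f2]; exact_mod_cast l2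
  have l3' : q3 ≤ q2 := by
    apply aux_pos4 (by linarith) (by linarith) 4 (by norm_num); rw [← f2, ← f3]; exact_mod_cast l3
  have l4' : q4 ≤ q2 := by
    apply aux_pos4 (by linarith) (by linarith) 4 (by norm_num); rw [← f2, ← f4]; exact_mod_cast l4
  have hqt : q1^2 ≤ t^3 := by
    apply aux_pos4 (by positivity) (by positivity) 2 (by norm_num)
    calc (q1^2)^2 = q1^4 := by ring
      _ ≤ t^6 := by rw [← f1]; exact hNT
      _ = _ := by ring
  have hprod : ((N1:ℝ) * N2 * N3 * N4)^((3:ℝ)/4) = q1^3 * q2^3 * q3^3 * q4^3 := by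
    rw [Real.mul_rpow (by positivity) (by positivity), Real.mul_rpow (by positivity) (by positivity),
      Real.mul_rpow (by positivity) (by positivity), i1, i2, i3, i4]
  rw [hprod]
  have h34 : q3 * q4 ≤ t^3 := by
    calc q3 * q4 ≤ q1 * q1 := by gcongr <;> linarith
      _ ≤ t^3 := by rw [← sq]; exact hqt
  have fin : ∀ X : ℝ, 0 ≤ X → (S.card:ℝ) ≤ 10000000 * X → X ≤ t^3 * Δ * (q1^3 * q2^3 * q3^3 * q4^3) → (S.card:ℝ) ≤ 32 * K * (t^3 * T^ε) * Δ * (q1^3 * q2^3 * q3^3 * q4^3) := by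
    intro X hX0 hX hX2
    calc (S.card:ℝ) ≤ 10000000 * X := hX
      _ ≤ 10000000 * (t^3 * Δ * (q1^3 * q2^3 * q3^3 * q4^3)) := by gcongr
      _ = 10000000 * (t^3 * 1) * Δ * (q1^3 * q2^3 * q3^3 * q4^3) := by ring
      _ ≤ _ := by gcongr; linarith
  by_cases hcase : 1 ≤ 8 * Δ * √N1
  · have := aux_case1 s1 s2 s3 s4 h1 N1 N2 N3 N4 p1 Δ hΔ0 hcase S hS
    apply fin (Δ * √N1 * (N2 * N3 * N4)) (by positivity)
    · refine this.trans ?_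
      rw [show 14 * Δ * √N1 * (N2 * N3 * N4) = 14 * (Δ * √N1 * (N2 * N3 * N4)) by ring]
      gcongr; norm_num
    · rw [g1, f2, f3, f4]
      calc Δ * q1^2 * (q2^4 * q3^4 * q4^4) = (Δ * q1^2 * q2^3 * q3^3 * q4^3) * (q2 * (q3 * q4)) := by ring
        _ ≤ (Δ * q1^2 * q2^3 * q3^3 * q4^3) * (q1 * t^3) := by gcongr
        _ = _ := by ring
  · push Not at hcase
    rcases S.eq_empty_or_nonempty with rfl | ⟨x0, hx0⟩
    · simp only [Finset.card_empty, Nat.cast_zero]; positivity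
    have hcl := aux_close s1 s2 s3 s4 h1 h2 h3 h4 N1 N2 N3 N4 p1 p2 l3 l4 Δ hΔ0 hcase x0 (hS x0 hx0)
    have hq12 : q1 ≤ 5 / 2 * q2 := by
      apply aux_pos4 (by linarith) (by linarith) 4 (by norm_num)
      rw [f1, f2] at hcl
      have : 0 ≤ q2^4 := by positivity
      rw [mul_pow]; linarith
    by_cases hT4 : t^2 ≤ N1
    · -- case 2a
      have h2a := aux_2a s1 s2 s3 s4 h1 h2 h3 h4 N1 N2 N3 N4 p1 p2 p3 p4 l2 (l3.trans l2) l4 Δ hΔ0 hcase S hS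
      rw [f1] at hT4
      have hten : ((10000000:ℝ) : ℝ) > 0 := by norm_num
      generalize hZ : (10000000:ℝ) = Z at fin hten
      apply fin ((S.card:ℝ) / Z) (div_nonneg (Nat.cast_nonneg _) hten.le) (by rw [mul_div_cancel₀ _ hten.ne'])
      rw [div_le_iff₀ hten]
      apply aux_pos4 (Nat.cast_nonneg _) (by positivity) 2 (by norm_num)
      refine h2a.trans ?_
      rw [g1, g2, g3, g4, f1, f2, f3, f4]
      have q1t : t ≤ q1^2 := by
        apply aux_pos4 (by positivity) (by positivity) 2 (by norm_num)
        calc t^2 ≤ q1^4 := hT4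
          _ = _ := by ring
      have a1 : 1 ≤ 5/2 * (t^6 * Δ^2 * (q1^2 * q2^2)) * (5/2) := by
        have : 1 ≤ (Δ * t^4)^2 := one_le_pow₀ hΔt
        have w : t^2 ≤ (5/2)^2 * (q1^2 * q2^2) := by
          calc t^2 ≤ q1^4 := hT4
            _ = q1^2 * q1^2 := by ring
            _ ≤ q1^2 * (5/2 * q2)^2 := by gcongr
            _ = _ := by ring
        calc (1:ℝ) ≤ (Δ * t^4)^2 := this
          _ = t^6 * Δ^2 * t^2 := by ring
          _ ≤ t^6 * Δ^2 * ((5/2)^2 * (q1^2 * q2^2)) := by gcongr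
          _ = _ := by ring
      have a2 : Δ * (q1^2 * q3^2) ≤ t^6 * Δ^2 * (q1^2 * q2^2) := by
        calc Δ * (q1^2 * q3^2) ≤ Δ * (q1^2 * q2^2) * 1 * 1 := by rw [mul_one, mul_one]; gcongr
          _ ≤ Δ * (q1^2 * q2^2) * (Δ * t^4) * t^2 := by gcongr; exact one_le_pow₀ ht1
          _ = _ := by ring
      have a3 : Δ * (q2^2 * q4^2) ≤ t^6 * Δ^2 * (q1^2 * q2^2) := by
        calc Δ * (q2^2 * q4^2) ≤ Δ * (q2^2 * q1^2) * 1 * 1 := by rw [mul_one, mul_one]; gcongr; linarith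
          _ ≤ Δ * (q2^2 * q1^2) * (Δ * t^4) * t^2 := by gcongr; exact one_le_pow₀ ht1
          _ = _ := by ring
      have a4 : Δ^2 * (q1^2 * q2^2 * (q3 * q4)^2) ≤ t^6 * Δ^2 * (q1^2 * q2^2) := by
        calc Δ^2 * (q1^2 * q2^2 * (q3 * q4)^2) ≤ Δ^2 * (q1^2 * q2^2 * (t^3)^2) := by gcongr
          _ = _ := by ring
      set V := t^6 * Δ^2 * (q1^2 * q2^2) with hV
      have a5 : (20 + 1000 * (Δ * (q1^2 * q3^2))) * (20 + 1000 * (Δ * (q2^2 * q4^2))) ≤ 2000000 * V := by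
        have : (20 + 1000 * (Δ * (q1^2 * q3^2))) * (20 + 1000 * (Δ * (q2^2 * q4^2))) = 400 + 20000 * (Δ * (q1^2 * q3^2)) + 20000 * (Δ * (q2^2 * q4^2)) + 1000000 * (Δ^2 * (q1^2 * q2^2 * (q3 * q4)^2)) := by ring
        rw [this]; linarith
      have a6 : 0 ≤ q1^4 * q2^4 * q3^6 * q4^6 := by positivity
      calc _ = 9 * (q1^4 * q2^4 * q3^6 * q4^6) * ((20 + 1000 * (Δ * (q1^2 * q3^2))) * (20 + 1000 * (Δ * (q2^2 * q4^2)))) := by ring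
        _ ≤ 9 * (q1^4 * q2^4 * q3^6 * q4^6) * (2000000 * V) := by gcongr
        _ = 18000000 * (t^3 * Δ * (q1^3 * q2^3 * q3^3 * q4^3))^2 := by rw [hV]; ring
        _ ≤ _ := by
          rw [mul_pow _ Z, ← hZ]
          have : 0 ≤ (t^3 * Δ * (q1^3 * q2^3 * q3^3 * q4^3))^2 := by positivity
          nlinarith
    · push Not at hT4
      have hT4' : q1^2 ≤ t := by
        apply aux_pos4 (by positivity) (by positivity) 2 (by norm_num)
        rw [f1] at hT4
        calc (q1^2)^2 = q1^4 := by ring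
          _ ≤ _ := hT4.le
      have hNT' : (N1:ℝ)^2 ≤ T := by
        rw [hTt]
        calc (N1:ℝ)^2 ≤ (t^2)^2 := by gcongr
          _ = t^4 := by ring
          _ ≤ t^8 := pow_le_pow_right₀ ht1 (by norm_num)
      have hNT1 : (N1:ℝ) ≤ T := by
        have : (1:ℝ) ≤ N1 := by exact_mod_cast p1
        nlinarith
      have hD : ∀ m : ℕ, 0 < m → m ≤ 64 * N1^2 → ((m).divisors.card : ℝ) ≤ C1 * 64^(ε/6) * T^(ε/6) := by
        intro m hm hm2
        refine (hdiv m hm.ne').trans ?_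
        rw [mul_assoc, ← Real.mul_rpow (by norm_num) hT0.le]
        have : (m:ℝ) ≤ 64 * T := by
          have : (m:ℝ) ≤ 64 * (N1:ℝ)^2 := by exact_mod_cast hm2
          linarith
        gcongr
      have h2b := aux_2b s1 s2 s3 s4 h1 h2 h3 h4 N1 N2 N3 N4 p1 p2 p3 p4 l2 (l3.trans l2) (l4.trans l2) Δ _ hΔ0 hcase hD S hS
      have hlog' : (1 + Real.log (8 * N1))^2 ≤ (C2 * 8^(ε/4))^2 * T^(ε/2) := by
        have hN' : (1:ℝ) ≤ N1 := by exact_mod_cast p1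
        have hl : 0 ≤ Real.log (8 * N1) := Real.log_nonneg (by linarith)
        have w : 1 + Real.log (8 * N1) ≤ C2 * 8^(ε/4) * T^(ε/4) := by
          have w1 := hlog (8 * T) (by linarith)
          have w2 : Real.log (8 * N1) ≤ Real.log (8 * T) := Real.log_le_log (by positivity) (by linarith)
          rw [Real.mul_rpow (by norm_num) hT0.le] at w1
          linarith
        calc _ ≤ (C2 * 8^(ε/4) * T^(ε/4))^2 := by gcongr
          _ = (C2 * 8^(ε/4))^2 * T^(ε/2) := by
            rw [mul_pow _ (T^(ε/4)), ← Real.rpow_natCast (T^(ε/4)), ← Real.rpow_mul hT0.le]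
            congr 2; push_cast; ring
      have hD3 : (C1 * 64^(ε/6) * T^(ε/6))^3 = (C1 * 64^(ε/6))^3 * T^(ε/2) := by
        rw [mul_pow _ (T^(ε/6)), ← Real.rpow_natCast (T^(ε/6)), ← Real.rpow_mul hT0.le]
        congr 2; push_cast; ring
      have hTT : T^(ε/2) * T^(ε/2) = T^ε := by rw [← Real.rpow_add hT0]; congr 1; ring
      obtain ⟨d, hd⟩ : ∃ d, d = √Δ := ⟨_, rfl⟩
      have hd0 : 0 < d := by rw [hd]; exact Real.sqrt_pos.mpr hΔ0
      have hdd : Δ = d^2 := by rw [hd, Real.sq_sqrt hΔ0.le]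
      have hdt : 1 ≤ d * t^2 := by
        apply aux_pos4 (by positivity) (by positivity) 2 (by norm_num)
        calc (1:ℝ)^2 = 1 := by norm_num
          _ ≤ _ := hΔt
          _ = _ := by rw [hdd]; ring
      have q13 : q1^3 ≤ 16 * q2^3 := by
        calc q1^3 ≤ (5/2 * q2)^3 := by gcongr
          _ = 125/8 * q2^3 := by ring
          _ ≤ _ := by gcongr; norm_num
      have hmain : Δ * N1^2 * √N1 * (N3 * N4) + √Δ * (N1:ℝ)^((7:ℝ)/4) * (N3 * N4 : ℝ)^((3:ℝ)/4) ≤ 32 * (t^3 * Δ * (q1^3 * q2^3 * q3^3 * q4^3)) := by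
        rw [Real.mul_rpow (by positivity) (by positivity), i3, i4, j1, g1, f1, f3, f4, ← hd, hdd]
        have b1 : d^2 * (q1^4)^2 * q1^2 * (q3^4 * q4^4) ≤ 16 * (t^3 * d^2 * (q1^3 * q2^3 * q3^3 * q4^3)) := by
          calc d^2 * (q1^4)^2 * q1^2 * (q3^4 * q4^4) = d^2 * (q1^3 * q1^3 * q3^3 * q4^3) * (q1^4 * (q3 * q4)) := by ring
            _ ≤ d^2 * (q1^3 * (16 * q2^3) * q3^3 * q4^3) * (q1^4 * (q1 * q1)) := by gcongr <;> linarith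
            _ = d^2 * (q1^3 * (16 * q2^3) * q3^3 * q4^3) * ((q1^2)^3) := by ring
            _ ≤ d^2 * (q1^3 * (16 * q2^3) * q3^3 * q4^3) * (t^3) := by gcongr
            _ = _ := by ring
        have b2 : d * q1^7 * (q3^3 * q4^3) ≤ 16 * (t^3 * d^2 * (q1^3 * q2^3 * q3^3 * q4^3)) := by
          calc d * q1^7 * (q3^3 * q4^3) = d * (q1^3 * q1^3 * q3^3 * q4^3) * q1 * 1 := by ring
            _ ≤ d * (q1^3 * (16 * q2^3) * q3^3 * q4^3) * t * (d * t^2) := by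
              gcongr
              nlinarith
            _ = _ := by ring
        linarith
      calc (S.card:ℝ) ≤ _ := h2b
        _ ≤ 10000000 * ((C1 * 64^(ε/6))^3 * T^(ε/2)) * ((C2 * 8^(ε/4))^2 * T^(ε/2)) * (32 * (t^3 * Δ * (q1^3 * q2^3 * q3^3 * q4^3))) := by
          rw [hD3]; gcongr
        _ = 32 * K * (t^3 * (T^(ε/2) * T^(ε/2))) * Δ * (q1^3 * q2^3 * q3^3 * q4^3) := by rw [hK]; ring
        _ = _ := by rw [hTT]

def HB (s1 s2 s3 s4 : ℤ) (N1 N2 N3 N4 : ℕ) (Δ R : ℝ) : Prop :=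
  ∀ S : Finset (ℕ × ℕ × ℕ × ℕ), (∀ x ∈ S, QP s1 s2 s3 s4 N1 N2 N3 N4 Δ x) →
    (S.card : ℝ) ≤ R * ((N1:ℝ) * N2 * N3 * N4)^((3:ℝ)/4)

lemma HB_swap12 {s1 s2 s3 s4 : ℤ} {N1 N2 N3 N4 : ℕ} {Δ R : ℝ} (h : HB s2 s1 s3 s4 N2 N1 N3 N4 Δ R) :
    HB s1 s2 s3 s4 N1 N2 N3 N4 Δ R := by
  intro S hS
  rw [← Finset.card_image_of_injective S (f := fun x : ℕ × ℕ × ℕ × ℕ => (x.2.1, x.1, x.2.2.1, x.2.2.2))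
    (by rintro ⟨a, b, c, d⟩ ⟨a', b', c', d'⟩ h; simp only [Prod.mk.injEq] at h ⊢; tauto)]
  rw [show (N1:ℝ) * N2 * N3 * N4 = (N2:ℝ) * N1 * N3 * N4 by ring]
  apply h
  intro y hy
  obtain ⟨x, hx, rfl⟩ := Finset.mem_image.mp hy
  obtain ⟨a1, a2, a3, a4, a5, a6⟩ := hS x hx
  have e : al s2 s1 s3 s4 (x.2.1, x.1, x.2.2.1, x.2.2.2) = al s1 s2 s3 s4 x := by simp only [al]; ring
  exact ⟨a2, a1, a3, a4, by rwa [e], by rwa [e]⟩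

lemma HB_swap23 {s1 s2 s3 s4 : ℤ} {N1 N2 N3 N4 : ℕ} {Δ R : ℝ} (h : HB s1 s3 s2 s4 N1 N3 N2 N4 Δ R) :
    HB s1 s2 s3 s4 N1 N2 N3 N4 Δ R := by
  intro S hS
  rw [← Finset.card_image_of_injective S (f := fun x : ℕ × ℕ × ℕ × ℕ => (x.1, x.2.2.1, x.2.1, x.2.2.2))
    (by rintro ⟨a, b, c, d⟩ ⟨a', b', c', d'⟩ h; simp only [Prod.mk.injEq] at h ⊢; tauto)]
  rw [show (N1:ℝ) * N2 * N3 * N4 = (N1:ℝ) * N3 * N2 * N4 by ring]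
  apply h
  intro y hy
  obtain ⟨x, hx, rfl⟩ := Finset.mem_image.mp hy
  obtain ⟨a1, a2, a3, a4, a5, a6⟩ := hS x hx
  have e : al s1 s3 s2 s4 (x.1, x.2.2.1, x.2.1, x.2.2.2) = al s1 s2 s3 s4 x := by simp only [al]; ring
  exact ⟨a1, a3, a2, a4, by rwa [e], by rwa [e]⟩

lemma HB_swap34 {s1 s2 s3 s4 : ℤ} {N1 N2 N3 N4 : ℕ} {Δ R : ℝ} (h : HB s1 s2 s4 s3 N1 N2 N4 N3 Δ R) :
    HB s1 s2 s3 s4 N1 N2 N3 N4 Δ R := by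
  intro S hS
  rw [← Finset.card_image_of_injective S (f := fun x : ℕ × ℕ × ℕ × ℕ => (x.1, x.2.1, x.2.2.2, x.2.2.1))
    (by rintro ⟨a, b, c, d⟩ ⟨a', b', c', d'⟩ h; simp only [Prod.mk.injEq] at h ⊢; tauto)]
  rw [show (N1:ℝ) * N2 * N3 * N4 = (N1:ℝ) * N2 * N4 * N3 by ring]
  apply h
  intro y hy
  obtain ⟨x, hx, rfl⟩ := Finset.mem_image.mp hy
  obtain ⟨a1, a2, a3, a4, a5, a6⟩ := hS x hx
  have e : al s1 s2 s4 s3 (x.1, x.2.1, x.2.2.2, x.2.2.1) = al s1 s2 s3 s4 x := by simp only [al]; ring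
  exact ⟨a1, a2, a4, a3, by rwa [e], by rwa [e]⟩

lemma aux_count (ε : ℝ) (hε : 0 < ε) : ∃ C : ℝ, 1 ≤ C ∧ ∀ T : ℝ, 10 ≤ T → ∀ s1 s2 s3 s4 : ℤ,
    (s1 = 1 ∨ s1 = -1) → (s2 = 1 ∨ s2 = -1) → (s3 = 1 ∨ s3 = -1) → (s4 = 1 ∨ s4 = -1) →
    ∀ N1 N2 N3 N4 : ℕ, 0 < N1 → 0 < N2 → 0 < N3 → 0 < N4 →
    (N1:ℝ) ≤ T^((3:ℝ)/4) → (N2:ℝ) ≤ T^((3:ℝ)/4) → (N3:ℝ) ≤ T^((3:ℝ)/4) → (N4:ℝ) ≤ T^((3:ℝ)/4) →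
    ∀ Δ : ℝ, T^(-(1:ℝ)/2) ≤ Δ → HB s1 s2 s3 s4 N1 N2 N3 N4 Δ (C * T^((3:ℝ)/8 + ε) * Δ) := by
  obtain ⟨C, hC, h⟩ := aux_sorted ε hε
  refine ⟨C, hC, ?_⟩
  intro T hT s1 s2 s3 s4 h1 h2 h3 h4 N1 N2 N3 N4 p1 p2 p3 p4 l1 l2 l3 l4 Δ hΔ
  have A : ∀ s1 s2 s3 s4 : ℤ,
    (s1 = 1 ∨ s1 = -1) → (s2 = 1 ∨ s2 = -1) → (s3 = 1 ∨ s3 = -1) → (s4 = 1 ∨ s4 = -1) →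
    ∀ N1 N2 N3 N4 : ℕ, 0 < N1 → 0 < N2 → 0 < N3 → 0 < N4 → (N1:ℝ) ≤ T^((3:ℝ)/4) →
    N2 ≤ N1 → N3 ≤ N2 → N4 ≤ N2 → HB s1 s2 s3 s4 N1 N2 N3 N4 Δ (C * T^((3:ℝ)/8 + ε) * Δ) := by
    intro s1 s2 s3 s4 h1 h2 h3 h4 N1 N2 N3 N4 p1 p2 p3 p4 l1 a1 a2 a3 S hS
    exact h T hT s1 s2 s3 s4 h1 h2 h3 h4 N1 N2 N3 N4 p1 p2 p3 p4 a1 a2 a3 l1 Δ hΔ S hS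
  have B : ∀ s1 s2 s3 s4 : ℤ,
    (s1 = 1 ∨ s1 = -1) → (s2 = 1 ∨ s2 = -1) → (s3 = 1 ∨ s3 = -1) → (s4 = 1 ∨ s4 = -1) →
    ∀ N1 N2 N3 N4 : ℕ, 0 < N1 → 0 < N2 → 0 < N3 → 0 < N4 → (N1:ℝ) ≤ T^((3:ℝ)/4) →
    N2 ≤ N1 → N3 ≤ N1 → N4 ≤ N1 → HB s1 s2 s3 s4 N1 N2 N3 N4 Δ (C * T^((3:ℝ)/8 + ε) * Δ) := by
    intro s1 s2 s3 s4 h1 h2 h3 h4 N1 N2 N3 N4 p1 p2 p3 p4 l1 a1 a2 a3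
    by_cases c1 : N3 ≤ N2 ∧ N4 ≤ N2
    · exact A _ _ _ _ h1 h2 h3 h4 _ _ _ _ p1 p2 p3 p4 l1 a1 c1.1 c1.2
    · by_cases c2 : N2 ≤ N3 ∧ N4 ≤ N3
      · exact HB_swap23 (A _ _ _ _ h1 h3 h2 h4 _ _ _ _ p1 p3 p2 p4 l1 a2 c2.1 c2.2)
      · exact HB_swap34 (HB_swap23 (A _ _ _ _ h1 h4 h2 h3 _ _ _ _ p1 p4 p2 p3 l1 a3 (by omega) (by omega)))
  by_cases c1 : N2 ≤ N1 ∧ N3 ≤ N1 ∧ N4 ≤ N1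
  · exact B _ _ _ _ h1 h2 h3 h4 _ _ _ _ p1 p2 p3 p4 l1 c1.1 c1.2.1 c1.2.2
  by_cases c2 : N1 ≤ N2 ∧ N3 ≤ N2 ∧ N4 ≤ N2
  · exact HB_swap12 (B _ _ _ _ h2 h1 h3 h4 _ _ _ _ p2 p1 p3 p4 l2 c2.1 c2.2.1 c2.2.2)
  by_cases c3 : N1 ≤ N3 ∧ N2 ≤ N3 ∧ N4 ≤ N3
  · exact HB_swap23 (HB_swap12 (B _ _ _ _ h3 h1 h2 h4 _ _ _ _ p3 p1 p2 p4 l3 c3.1 c3.2.1 c3.2.2))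
  · exact HB_swap34 (HB_swap23 (HB_swap12 (B _ _ _ _ h4 h1 h2 h3 _ _ _ _ p4 p1 p2 p3 l4 (by omega) (by omega) (by omega))))


lemma aux_dy (n : ℕ) (hn : 1 ≤ n) : 2^(Nat.log 2 n) ≤ n ∧ n < 2*2^(Nat.log 2 n) := by
  refine ⟨Nat.pow_log_le_self 2 (by omega), ?_⟩
  have := Nat.lt_pow_succ_log_self (b := 2) (by norm_num) n
  rw [pow_succ] at this; omega

lemma aux_clsw (T a : ℝ) (hT : 10 ≤ T) (ha : 0 < a) :
    a ≤ 2^(Nat.clog 2 ⌈√T*a⌉₊) * T^(-(1:ℝ)/2) ∧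
    min T (√T/a) ≤ 2*T/2^(Nat.clog 2 ⌈√T*a⌉₊) := by
  have hT0 : 0 < T := by linarith
  have hs : 0 < √T := Real.sqrt_pos.2 hT0
  have hss : √T*√T = T := Real.mul_self_sqrt hT0.le
  have hinv : T^(-(1:ℝ)/2) = (√T)⁻¹ := by
    rw [show -(1:ℝ)/2 = -(1/2) by ring, Real.rpow_neg hT0.le, Real.sqrt_eq_rpow]
  set m := ⌈√T*a⌉₊ with hm
  have h1 : √T*a ≤ m := Nat.le_ceil _
  have h2 : m ≤ 2^(Nat.clog 2 m) := Nat.le_pow_clog (by norm_num) m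
  have h2' : (m:ℝ) ≤ 2^(Nat.clog 2 m) := by exact_mod_cast h2
  constructor
  · rw [hinv, ← div_eq_mul_inv, le_div_iff₀ hs]; linarith
  · by_cases h0 : Nat.clog 2 m = 0
    · rw [h0]; simp only [pow_zero, div_one]
      exact (min_le_left _ _).trans (by linarith)
    · have hm1 : 1 < m := by
        by_contra hc
        exact h0 (Nat.clog_of_right_le_one (by omega) 2)
      have h3 : 2^(Nat.clog 2 m).pred < m := Nat.pow_pred_clog_lt_self (by norm_num) hm1
      have h4 : 2^(Nat.clog 2 m).pred + 1 ≤ m := h3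
      have h5 : (2:ℝ)^(Nat.clog 2 m).pred + 1 ≤ m := by exact_mod_cast h4
      have h6 : (m:ℝ) < √T*a + 1 := Nat.ceil_lt_add_one (by positivity)
      have h7 : (2:ℝ)^(Nat.clog 2 m) = 2 * 2^(Nat.clog 2 m).pred := by
        rw [← pow_succ']; congr 1
        have := Nat.succ_pred h0; omega
      refine (min_le_right _ _).trans ?_
      rw [div_le_div_iff₀ ha (by positivity), h7]
      have : √T * (2 * 2^(Nat.clog 2 m).pred) ≤ √T * (2*(√T*a)) := by
        gcongr; linarith
      nlinarith

lemma aux_K (T : ℝ) (hT : 10 ≤ T) : ((Nat.clog 2 ⌈4*T⌉₊ + 1 : ℕ):ℝ) ≤ 8*(1+Real.log T) := by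
  have hlogT : 0 ≤ Real.log T := Real.log_nonneg (by linarith)
  set m := ⌈4*T⌉₊ with hm
  have hm4 : 4*T ≤ m := Nat.le_ceil _
  have hm1 : 1 < m := by
    have : (1:ℝ) < m := by linarith
    exact_mod_cast this
  have h3 : 2^(Nat.clog 2 m).pred < m := Nat.pow_pred_clog_lt_self (by norm_num) hm1
  have h5 : (2:ℝ)^(Nat.clog 2 m).pred < m := by exact_mod_cast h3
  have h6 : (m:ℝ) < 4*T + 1 := Nat.ceil_lt_add_one (by positivity)
  have h7 : (2:ℝ)^(Nat.clog 2 m).pred ≤ 2^3*T := by linarith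
  have h8 := Real.log_le_log (by positivity) h7
  rw [Real.log_pow, Real.log_mul (by norm_num) (by linarith), Real.log_pow] at h8
  have h9 := Real.log_two_gt_d9
  have h10 := Real.log_two_lt_d9
  have h11 : (Nat.clog 2 m) ≤ (Nat.clog 2 m).pred + 1 := by rw [Nat.pred_eq_sub_one]; omega
  have h12 : ((Nat.clog 2 m : ℕ):ℝ) ≤ (Nat.clog 2 m).pred + 1 := by exact_mod_cast h11
  push_cast at h8 ⊢
  have h13 : (0:ℝ) ≤ ((Nat.clog 2 m).pred:ℝ) := Nat.cast_nonneg _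
  nlinarith

def wt (T : ℝ) (s1 s2 s3 s4 : ℤ) (x : ℕ×ℕ×ℕ×ℕ) : ℝ :=
  ((x.1:ℝ)*x.2.1*x.2.2.1*x.2.2.2)^(-(3:ℝ)/4) * min T (√T/|al s1 s2 s3 s4 x|)

lemma aux_al_le (T : ℝ) (hT : 10 ≤ T) (s1 s2 s3 s4 : ℤ)
    (h1 : s1 = 1 ∨ s1 = -1) (h2 : s2 = 1 ∨ s2 = -1) (h3 : s3 = 1 ∨ s3 = -1) (h4 : s4 = 1 ∨ s4 = -1)
    (x : ℕ×ℕ×ℕ×ℕ) (b1 : (x.1:ℝ) ≤ T^((3:ℝ)/4)) (b2 : (x.2.1:ℝ) ≤ T^((3:ℝ)/4))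
    (b3 : (x.2.2.1:ℝ) ≤ T^((3:ℝ)/4)) (b4 : (x.2.2.2:ℝ) ≤ T^((3:ℝ)/4)) :
    √T * |al s1 s2 s3 s4 x| ≤ 4*T := by
  have hT0 : 0 < T := by linarith
  have hss : √T*√T = T := Real.mul_self_sqrt hT0.le
  have hle : T^((3:ℝ)/4) ≤ T := by
    conv_rhs => rw [← Real.rpow_one T]
    exact Real.rpow_le_rpow_of_exponent_le (by linarith) (by norm_num)
  have q : ∀ n : ℕ, (n:ℝ) ≤ T^((3:ℝ)/4) → √(n:ℝ) ≤ √T := fun n hn => Real.sqrt_le_sqrt (hn.trans hle)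
  have q1 := q _ b1
  have q2 := q _ b2
  have q3 := q _ b3
  have q4 := q _ b4
  have r : ∀ n : ℕ, 0 ≤ √(n:ℝ) := fun n => Real.sqrt_nonneg _
  have r1 := r x.1
  have r2 := r x.2.1
  have r3 := r x.2.2.1
  have r4 := r x.2.2.2
  have : |al s1 s2 s3 s4 x| ≤ 4*√T := by
    unfold al
    rw [abs_le]
    rcases h1 with rfl | rfl <;> rcases h2 with rfl | rfl <;> rcases h3 with rfl | rfl <;> rcases h4 with rfl | rfl <;>
      push_cast <;> constructor <;> linarith
  calc √T * |al s1 s2 s3 s4 x| ≤ √T * (4*√T) := by gcongr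
    _ = 4*(√T*√T) := by ring
    _ = 4*T := by rw [hss]

def keyf (T : ℝ) (s1 s2 s3 s4 : ℤ) (x : ℕ×ℕ×ℕ×ℕ) : ℕ×ℕ×ℕ×ℕ×ℕ :=
  (Nat.log 2 x.1, Nat.log 2 x.2.1, Nat.log 2 x.2.2.1, Nat.log 2 x.2.2.2,
    Nat.clog 2 ⌈√T * |al s1 s2 s3 s4 x|⌉₊)

def OKx (T : ℝ) (s1 s2 s3 s4 : ℤ) (x : ℕ×ℕ×ℕ×ℕ) : Prop :=
  (1 ≤ x.1 ∧ 1 ≤ x.2.1 ∧ 1 ≤ x.2.2.1 ∧ 1 ≤ x.2.2.2) ∧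
  ((x.1:ℝ) ≤ T^((3:ℝ)/4) ∧ (x.2.1:ℝ) ≤ T^((3:ℝ)/4) ∧ (x.2.2.1:ℝ) ≤ T^((3:ℝ)/4) ∧ (x.2.2.2:ℝ) ≤ T^((3:ℝ)/4)) ∧
  al s1 s2 s3 s4 x ≠ 0

lemma aux_key_mem (T : ℝ) (hT : 10 ≤ T) (s1 s2 s3 s4 : ℤ)
    (h1 : s1 = 1 ∨ s1 = -1) (h2 : s2 = 1 ∨ s2 = -1) (h3 : s3 = 1 ∨ s3 = -1) (h4 : s4 = 1 ∨ s4 = -1)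
    (x : ℕ×ℕ×ℕ×ℕ) (hx : OKx T s1 s2 s3 s4 x) :
    keyf T s1 s2 s3 s4 x ∈ (range (Nat.clog 2 ⌈4*T⌉₊ + 1)) ×ˢ (range (Nat.clog 2 ⌈4*T⌉₊ + 1)) ×ˢ
      (range (Nat.clog 2 ⌈4*T⌉₊ + 1)) ×ˢ (range (Nat.clog 2 ⌈4*T⌉₊ + 1)) ×ˢ (range (Nat.clog 2 ⌈4*T⌉₊ + 1)) := by
  obtain ⟨-, ⟨b1, b2, b3, b4⟩, -⟩ := hx
  have hle : T^((3:ℝ)/4) ≤ T := by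
    conv_rhs => rw [← Real.rpow_one T]
    exact Real.rpow_le_rpow_of_exponent_le (by linarith) (by norm_num)
  have q : ∀ n : ℕ, (n:ℝ) ≤ T^((3:ℝ)/4) → Nat.log 2 n < Nat.clog 2 ⌈4*T⌉₊ + 1 := by
    intro n hn
    have hc : (n:ℝ) ≤ ⌈4*T⌉₊ := by have := Nat.le_ceil (4*T); linarith
    have hc' : n ≤ ⌈4*T⌉₊ := by exact_mod_cast hc
    have := (Nat.log_le_clog 2 n).trans (Nat.clog_mono_right 2 hc')
    omega
  simp only [keyf, mem_product, mem_range]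
  refine ⟨q _ b1, q _ b2, q _ b3, q _ b4, ?_⟩
  have := Nat.clog_mono_right 2 (Nat.ceil_mono (aux_al_le T hT s1 s2 s3 s4 h1 h2 h3 h4 x b1 b2 b3 b4))
  omega

lemma aux_wsum (ε : ℝ) (hε : 0 < ε) : ∃ C : ℝ, 1 ≤ C ∧ ∀ T : ℝ, 10 ≤ T → ∀ s1 s2 s3 s4 : ℤ,
    (s1 = 1 ∨ s1 = -1) → (s2 = 1 ∨ s2 = -1) → (s3 = 1 ∨ s3 = -1) → (s4 = 1 ∨ s4 = -1) →
    ∀ S : Finset (ℕ×ℕ×ℕ×ℕ), (∀ x ∈ S, OKx T s1 s2 s3 s4 x) →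
      ∑ x ∈ S, wt T s1 s2 s3 s4 x ≤ C * T^((7:ℝ)/8 + ε) := by
  obtain ⟨C, hC, hcount⟩ := aux_count (ε/2) (by positivity)
  obtain ⟨D, hD, hlog⟩ := aux_log_le (ε/10) (by positivity)
  refine ⟨2*C*(8*D)^5, ?_, ?_⟩
  · have : (1:ℝ) ≤ (8*D)^5 := one_le_pow₀ (by linarith)
    nlinarith
  intro T hT s1 s2 s3 s4 h1 h2 h3 h4 S hS
  have hT0 : 0 < T := by linarith
  set K := Nat.clog 2 ⌈4*T⌉₊ + 1 with hK
  have hmem : ∀ x ∈ S, keyf T s1 s2 s3 s4 x ∈ (range K) ×ˢ (range K) ×ˢ (range K) ×ˢ (range K) ×ˢ (range K) :=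
    fun x hx => aux_key_mem T hT s1 s2 s3 s4 h1 h2 h3 h4 x (hS x hx)
  rw [← Finset.sum_fiberwise_of_maps_to hmem]
  have hone : ∀ k ∈ (range K) ×ˢ (range K) ×ˢ (range K) ×ˢ (range K) ×ˢ (range K),
      ∑ x ∈ S with keyf T s1 s2 s3 s4 x = k, wt T s1 s2 s3 s4 x ≤ 2*C*T^((7:ℝ)/8+ε/2) := by
    rintro ⟨a, b, c, d, i⟩ -
    set F := S.filter (fun x => keyf T s1 s2 s3 s4 x = (a,b,c,d,i)) with hF
    by_cases hne : F.Nonempty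
    swap
    · rw [Finset.not_nonempty_iff_eq_empty.1 hne, Finset.sum_empty]; positivity
    have hfac : ∀ x ∈ F, ((2^a ≤ x.1 ∧ x.1 < 2*2^a) ∧ (2^b ≤ x.2.1 ∧ x.2.1 < 2*2^b) ∧
        (2^c ≤ x.2.2.1 ∧ x.2.2.1 < 2*2^c) ∧ (2^d ≤ x.2.2.2 ∧ x.2.2.2 < 2*2^d)) ∧
        |al s1 s2 s3 s4 x| ≤ 2^i*T^(-(1:ℝ)/2) ∧ min T (√T/|al s1 s2 s3 s4 x|) ≤ 2*T/2^i := by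
      intro x hx
      rw [hF, mem_filter] at hx
      obtain ⟨hxS, hk⟩ := hx
      obtain ⟨⟨p1, p2, p3, p4⟩, -, hal⟩ := hS x hxS
      simp only [keyf, Prod.mk.injEq] at hk
      obtain ⟨rfl, rfl, rfl, rfl, rfl⟩ := hk
      exact ⟨⟨aux_dy _ p1, aux_dy _ p2, aux_dy _ p3, aux_dy _ p4⟩, aux_clsw T _ hT (abs_pos.2 hal)⟩
    have hcard : (F.card:ℝ) ≤ (C * T^((3:ℝ)/8+ε/2) * (2^i*T^(-(1:ℝ)/2))) *
        (((2^a:ℕ):ℝ)*(2^b:ℕ)*(2^c:ℕ)*(2^d:ℕ))^((3:ℝ)/4) := by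
      obtain ⟨x0, hx0⟩ := hne
      obtain ⟨⟨u1, u2, u3, u4⟩, -⟩ := hfac x0 hx0
      obtain ⟨-, ⟨b1, b2, b3, b4⟩, -⟩ := hS x0 (mem_filter.1 hx0).1
      have tr : ∀ (N n : ℕ), N ≤ n → (n:ℝ) ≤ T^((3:ℝ)/4) → (N:ℝ) ≤ T^((3:ℝ)/4) := by
        intro N n hNn hn
        exact le_trans (by exact_mod_cast hNn) hn
      refine hcount T hT s1 s2 s3 s4 h1 h2 h3 h4 (2^a) (2^b) (2^c) (2^d) (by positivity) (by positivity)
        (by positivity) (by positivity) (tr _ _ u1.1 b1) (tr _ _ u2.1 b2) (tr _ _ u3.1 b3) (tr _ _ u4.1 b4)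
        (2^i*T^(-(1:ℝ)/2)) ?_ F ?_
      · have : (1:ℝ) ≤ 2^i := one_le_pow₀ (by norm_num)
        have h0 : 0 ≤ T^(-(1:ℝ)/2) := by positivity
        nlinarith
      · intro x hx
        obtain ⟨⟨v1, v2, v3, v4⟩, v5, -⟩ := hfac x hx
        exact ⟨v1, v2, v3, v4, (hS x (mem_filter.1 hx).1).2.2, v5⟩
    set P : ℝ := (((2^a:ℕ):ℝ)*(2^b:ℕ)*(2^c:ℕ)*(2^d:ℕ)) with hP
    have hPpos : 0 < P := by rw [hP]; positivity
    have hw : ∀ x ∈ F, wt T s1 s2 s3 s4 x ≤ P^(-(3:ℝ)/4) * (2*T/2^i) := by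
      intro x hx
      obtain ⟨⟨v1, v2, v3, v4⟩, -, v6⟩ := hfac x hx
      unfold wt
      have e1 : ((2^a:ℕ):ℝ) ≤ x.1 := by exact_mod_cast v1.1
      have e2 : ((2^b:ℕ):ℝ) ≤ x.2.1 := by exact_mod_cast v2.1
      have e3 : ((2^c:ℕ):ℝ) ≤ x.2.2.1 := by exact_mod_cast v3.1
      have e4 : ((2^d:ℕ):ℝ) ≤ x.2.2.2 := by exact_mod_cast v4.1
      have hPx : P ≤ (x.1:ℝ)*x.2.1*x.2.2.1*x.2.2.2 := by
        rw [hP]; gcongr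
      have := Real.rpow_le_rpow_of_nonpos hPpos hPx (show -(3:ℝ)/4 ≤ 0 by norm_num)
      exact mul_le_mul this v6 (le_min hT0.le (by positivity)) (by positivity)
    have hsum := Finset.sum_le_card_nsmul F _ _ hw
    rw [nsmul_eq_mul] at hsum
    refine hsum.trans ?_
    refine (mul_le_mul_of_nonneg_right hcard (by positivity)).trans (le_of_eq ?_)
    have hPP : P^((3:ℝ)/4) * P^(-(3:ℝ)/4) = 1 := by
      rw [← Real.rpow_add hPpos]; norm_num
    have hTT : T^((3:ℝ)/8+ε/2) * T^(-(1:ℝ)/2) * T = T^((7:ℝ)/8+ε/2) := by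
      nth_rewrite 3 [← Real.rpow_one T]
      rw [← Real.rpow_add hT0, ← Real.rpow_add hT0]; congr 1; ring
    have h2i : (2:ℝ)^i ≠ 0 := by positivity
    calc _ = 2*C*(T^((3:ℝ)/8+ε/2) * T^(-(1:ℝ)/2) * T) * (P^((3:ℝ)/4) * P^(-(3:ℝ)/4)) * ((2:ℝ)^i/2^i) := by ring
      _ = _ := by rw [hPP, hTT, div_self h2i]; ring
  have hs2 := Finset.sum_le_card_nsmul _ _ _ hone
  rw [nsmul_eq_mul] at hs2
  refine hs2.trans ?_
  simp only [card_product, card_range]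
  have hKb : (K:ℝ) ≤ 8*(D*T^(ε/10)) := (aux_K T hT).trans (by have := hlog T (by linarith); linarith)
  have hKp : (K:ℝ)^5 ≤ (8*(D*T^(ε/10)))^5 := pow_le_pow_left₀ (Nat.cast_nonneg _) hKb 5
  have hT5 : (T^(ε/10))^5 = T^(ε/2) := by
    rw [← Real.rpow_natCast, ← Real.rpow_mul hT0.le]; congr 1; push_cast; ring
  have hfin : T^(ε/2) * T^((7:ℝ)/8+ε/2) = T^((7:ℝ)/8+ε) := by
    rw [← Real.rpow_add hT0]; congr 1; ring
  have h0 : 0 ≤ 2*C*T^((7:ℝ)/8+ε/2) := by positivity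
  calc _ = (K:ℝ)^5 * (2*C*T^((7:ℝ)/8+ε/2)) := by push_cast; ring
    _ ≤ (8*(D*T^(ε/10)))^5 * (2*C*T^((7:ℝ)/8+ε/2)) := mul_le_mul_of_nonneg_right hKp h0
    _ = 2*C*(8*D)^5*((T^(ε/10))^5 * T^((7:ℝ)/8+ε/2)) := by ring
    _ = _ := by rw [hT5, hfin]


lemma aux_osc (T c φ : ℝ) (hT : 10 ≤ T) (hc : c ≠ 0) :
    |∫ x in (T/2)..T, x * Real.cos (c*√x - φ)| ≤ 7*T*min T (√T/|c|) := by
  have hT0 : 0 < T := by linarith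
  have hle : T/2 ≤ T := by linarith
  have hs0 : 0 ≤ √T := Real.sqrt_nonneg _
  have hc0 : 0 < |c| := abs_pos.2 hc
  have hcont : Continuous (fun x : ℝ => x * Real.cos (c*√x - φ)) := by fun_prop
  have hcont2 : Continuous (fun x : ℝ => (3*√x/c) * Real.sin (c*√x - φ)) := by fun_prop
  rw [mul_min_of_nonneg _ _ (by positivity)]
  refine le_min ?_ ?_
  · have := intervalIntegral.norm_integral_le_of_norm_le_const (a := T/2) (b := T) (C := T)
      (f := fun x : ℝ => x * Real.cos (c*√x - φ)) ?_
    · rw [Real.norm_eq_abs, abs_of_nonneg (by linarith : (0:ℝ) ≤ T - T/2)] at this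
      nlinarith
    · intro x hx
      rw [Set.uIoc_of_le hle] at hx
      rw [Real.norm_eq_abs, abs_mul]
      have hx0 : 0 < x := by linarith [hx.1]
      rw [abs_of_pos hx0]
      have := Real.abs_cos_le_one (c*√x - φ)
      have := hx.2
      nlinarith [abs_nonneg (Real.cos (c*√x - φ))]
  · have hder : ∀ x ∈ Set.uIcc (T/2) T, HasDerivAt (fun x : ℝ => x*(2*√x/c)*Real.sin (c*√x - φ))
        (x * Real.cos (c*√x - φ) + (3*√x/c) * Real.sin (c*√x - φ)) x := by
      intro x hx
      rw [Set.uIcc_of_le hle] at hx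
      have hx0 : 0 < x := by linarith [hx.1]
      have hsx : √x ≠ 0 := (Real.sqrt_pos.2 hx0).ne'
      have hd := Real.hasDerivAt_sqrt hx0.ne'
      have h1 := ((hd.const_mul 2).div_const c)
      have h2 := (hasDerivAt_id x).mul h1
      have h3 := ((hd.const_mul c).sub_const φ).sin
      have h4 := h2.mul h3
      refine h4.congr_deriv ?_
      have hxx : x = √x*√x := (Real.mul_self_sqrt hx0.le).symm
      simp only [id, Pi.mul_apply]
      set r := √x
      rw [hxx]
      field_simp
      ring
    have hI := intervalIntegral.integral_eq_sub_of_hasDerivAt hder ((hcont.add hcont2).intervalIntegrable _ _)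
    rw [intervalIntegral.integral_add (hcont.intervalIntegrable _ _) (hcont2.intervalIntegrable _ _)] at hI
    have hb : ∀ x, 0 ≤ x → x ≤ T → |x*(2*√x/c)*Real.sin (c*√x - φ)| ≤ 2*(T*(√T/|c|)) := by
      intro x h0 h1
      have hsq : √x ≤ √T := Real.sqrt_le_sqrt h1
      have hsn := Real.abs_sin_le_one (c*√x - φ)
      rw [abs_mul, abs_mul, abs_div, abs_mul, abs_of_nonneg h0, abs_of_nonneg (Real.sqrt_nonneg x), abs_two]
      calc _ ≤ T*(2*√T/|c|)*1 := by gcongr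
        _ = _ := by ring
    have hJ : |∫ x in (T/2)..T, (3*√x/c) * Real.sin (c*√x - φ)| ≤ 3*(√T/|c|)*(T/2) := by
      have := intervalIntegral.norm_integral_le_of_norm_le_const (a := T/2) (b := T) (C := 3*(√T/|c|))
        (f := fun x : ℝ => (3*√x/c) * Real.sin (c*√x - φ)) ?_
      · rw [Real.norm_eq_abs, abs_of_nonneg (by linarith : (0:ℝ) ≤ T - T/2)] at this
        refine this.trans (le_of_eq ?_); ring
      · intro x hx
        rw [Set.uIoc_of_le hle] at hx
        have hsq : √x ≤ √T := Real.sqrt_le_sqrt hx.2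
        have hsn := Real.abs_sin_le_one (c*√x - φ)
        rw [Real.norm_eq_abs, abs_mul, abs_div, abs_mul, abs_of_nonneg (Real.sqrt_nonneg x),
          abs_of_pos (by norm_num : (0:ℝ) < 3)]
        calc _ ≤ (3*√T/|c|)*1 := by gcongr
          _ = _ := by ring
    have hb1 := hb T hT0.le le_rfl
    have hb2 := hb (T/2) (by linarith) hle
    have hq : 0 ≤ T*(√T/|c|) := by positivity
    rw [abs_le] at hb1 hb2 hJ ⊢
    constructor <;> nlinarith [hb1.1, hb1.2, hb2.1, hb2.2, hJ.1, hJ.2]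

lemma aux_int_sum {ι : Type*} (s : Finset ι) (f : ι → ℝ → ℝ) (a b : ℝ) (hf : ∀ i ∈ s, Continuous (f i)) :
    |∫ x in a..b, ∑ i ∈ s, f i x| ≤ ∑ i ∈ s, |∫ x in a..b, f i x| := by
  rw [intervalIntegral.integral_finset_sum (fun i hi => (hf i hi).intervalIntegrable _ _)]
  exact Finset.abs_sum_le_sum_abs _ _

def sg (k : Fin 2) : ℤ := (-1)^(k:ℕ)

lemma sg_or (k : Fin 2) : sg k = 1 ∨ sg k = -1 := by
  fin_cases k <;> simp [sg]

lemma alphaNI_eq (n : ℕ×ℕ×ℕ×ℕ) (i : Fin 2 × Fin 2 × Fin 2) :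
    alphaNI n i = al 1 (sg i.1) (sg i.2.1) (sg i.2.2) n := by
  simp [alphaNI, al, sg]

def Gt (M₁ M₂ ℓ₁ ℓ₂ : ℕ) (i : Fin 2 × Fin 2 × Fin 2) (n : ℕ×ℕ×ℕ×ℕ) (x : ℝ) : ℝ :=
  if alphaNI n i ≠ 0 then
    ((n.1 : ℝ) * n.2.1 * n.2.2.1 * n.2.2.2) ^ (-(3:ℝ)/4) *
      ∑ p ∈ Nat.divisorsAntidiagonal n.1 ×ˢ Nat.divisorsAntidiagonal n.2.1 ×ˢ
          Nat.divisorsAntidiagonal n.2.2.1 ×ˢ Nat.divisorsAntidiagonal n.2.2.2,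
        Real.cos (4 * π * alphaNI n i * Real.sqrt x
          - 2 * π * betaSum M₁ M₂ ℓ₁ ℓ₂ i p.1 p.2.1 p.2.2.1 p.2.2.2)
  else 0

lemma Gt_cont (M₁ M₂ ℓ₁ ℓ₂ : ℕ) (i : Fin 2 × Fin 2 × Fin 2) (n : ℕ×ℕ×ℕ×ℕ) :
    Continuous (Gt M₁ M₂ ℓ₁ ℓ₂ i n) := by
  unfold Gt
  split_ifs
  · refine continuous_const.mul (continuous_finset_sum _ fun p _ => ?_)
    fun_prop
  · exact continuous_const

lemma S2_eq (M₁ M₂ ℓ₁ ℓ₂ : ℕ) (y x : ℝ) :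
    S2 M₁ M₂ ℓ₁ ℓ₂ y x = ∑ i : Fin 2 × Fin 2 × Fin 2,
      ∑ n ∈ Finset.Icc 1 ⌊y⌋₊ ×ˢ Finset.Icc 1 ⌊y⌋₊ ×ˢ Finset.Icc 1 ⌊y⌋₊ ×ˢ Finset.Icc 1 ⌊y⌋₊,
        x / (32 * π ^ 4) * Gt M₁ M₂ ℓ₁ ℓ₂ i n x := by
  unfold S2 Gt
  rw [Finset.mul_sum]
  refine Finset.sum_congr rfl fun i _ => ?_
  simp only [Finset.sum_product, Finset.mul_sum]

lemma aux_term (M₁ M₂ ℓ₁ ℓ₂ : ℕ) (i : Fin 2 × Fin 2 × Fin 2) (n : ℕ×ℕ×ℕ×ℕ) (T : ℝ) (hT : 10 ≤ T)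
    (ha : alphaNI n i ≠ 0) :
    |∫ x in (T/2)..T, x / (32 * π ^ 4) * Gt M₁ M₂ ℓ₁ ℓ₂ i n x| ≤
      ((n.1.divisors.card:ℝ) * n.2.1.divisors.card * n.2.2.1.divisors.card * n.2.2.2.divisors.card) *
        (T * wt T 1 (sg i.1) (sg i.2.1) (sg i.2.2) n) := by
  have hT0 : 0 < T := by linarith
  have hpi : 3 < π := Real.pi_gt_three
  set P := Nat.divisorsAntidiagonal n.1 ×ˢ Nat.divisorsAntidiagonal n.2.1 ×ˢ
          Nat.divisorsAntidiagonal n.2.2.1 ×ˢ Nat.divisorsAntidiagonal n.2.2.2 with hP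
  set w := ((n.1 : ℝ) * n.2.1 * n.2.2.1 * n.2.2.2) ^ (-(3:ℝ)/4) with hw
  have hw0 : 0 ≤ w := by rw [hw]; positivity
  set c := 4 * π * alphaNI n i with hc
  have hc0 : c ≠ 0 := by rw [hc]; positivity
  have e : ∀ x, x / (32 * π ^ 4) * Gt M₁ M₂ ℓ₁ ℓ₂ i n x =
      ∑ p ∈ P, (w/(32*π^4)) * (x * Real.cos (c*√x - 2 * π * betaSum M₁ M₂ ℓ₁ ℓ₂ i p.1 p.2.1 p.2.2.1 p.2.2.2)) := by
    intro x
    unfold Gt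
    rw [if_pos ha, Finset.mul_sum, Finset.mul_sum]
    refine Finset.sum_congr rfl fun p _ => ?_
    ring
  simp only [e]
  refine (aux_int_sum _ _ _ _ (fun p _ => by fun_prop)).trans ?_
  have hb : ∀ p ∈ P, |∫ x in (T/2)..T, (w/(32*π^4)) * (x * Real.cos (c*√x - 2 * π * betaSum M₁ M₂ ℓ₁ ℓ₂ i p.1 p.2.1 p.2.2.1 p.2.2.2))|
      ≤ T * wt T 1 (sg i.1) (sg i.2.1) (sg i.2.2) n := by
    intro p _
    rw [intervalIntegral.integral_const_mul, abs_mul, abs_of_nonneg (by positivity)]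
    have h1 := aux_osc T c (2 * π * betaSum M₁ M₂ ℓ₁ ℓ₂ i p.1 p.2.1 p.2.2.1 p.2.2.2) hT hc0
    have hcα : |alphaNI n i| ≤ |c| := by
      rw [hc, abs_mul, abs_of_pos (by positivity : 0 < 4*π)]
      have := abs_nonneg (alphaNI n i)
      nlinarith
    have hap : 0 < |alphaNI n i| := abs_pos.2 ha
    have h2 : min T (√T/|c|) ≤ min T (√T/|alphaNI n i|) := by
      refine min_le_min le_rfl ?_
      gcongr
    have h3 : 7 ≤ 32*π^4 := by
      have : 1 ≤ π^4 := one_le_pow₀ (by linarith)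
      linarith
    have hm0 : 0 ≤ min T (√T/|alphaNI n i|) := le_min hT0.le (by positivity)
    have h4 := h1.trans (mul_le_mul_of_nonneg_left h2 (by positivity : 0 ≤ 7*T))
    unfold wt
    rw [← alphaNI_eq, ← hw]
    calc _ ≤ w/(32*π^4) * (7*T*min T (√T/|alphaNI n i|)) := mul_le_mul_of_nonneg_left h4 (by positivity)
      _ = (7/(32*π^4)) * (T*(w * min T (√T/|alphaNI n i|))) := by ring
      _ ≤ 1 * (T*(w * min T (√T/|alphaNI n i|))) := by
          refine mul_le_mul_of_nonneg_right ?_ (by positivity)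
          rw [div_le_one (by positivity)]; exact h3
      _ = _ := by ring
  have hs := Finset.sum_le_card_nsmul P _ _ hb
  rw [nsmul_eq_mul] at hs
  refine hs.trans (le_of_eq ?_)
  have hcd : ∀ m : ℕ, (Nat.divisorsAntidiagonal m).card = m.divisors.card := by
    intro m
    rw [← Nat.map_div_right_divisors, Finset.card_map]
  rw [hP]
  simp only [card_product, hcd]
  push_cast
  ring

theorem S2_integral_bound
    (M₁ M₂ ℓ₁ ℓ₂ : ℕ) (hM₁ : 0 < M₁) (hM₂ : 0 < M₂)
    (hℓ₁ : 1 ≤ ℓ₁) (hℓ₁' : ℓ₁ ≤ M₁) (hℓ₂ : 1 ≤ ℓ₂) (hℓ₂' : ℓ₂ ≤ M₂)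
    (ε : ℝ) (hε : 0 < ε) :
    ∃ C > 0, ∀ T : ℝ, 10 ≤ T →
      |∫ x in (T/2)..T, S2 M₁ M₂ ℓ₁ ℓ₂ (T ^ ((3:ℝ)/4)) x|
        ≤ C * T ^ (2 - 1/8 + ε) := by
  obtain ⟨C, hC, hsum⟩ := aux_wsum (ε/2) (by positivity)
  obtain ⟨D, hD, hdiv⟩ := aux_div (ε/8) (by positivity)
  refine ⟨8*(D^4*C), by positivity, ?_⟩
  intro T hT
  have hT0 : 0 < T := by linarith
  have hle : T^((3:ℝ)/4) ≤ T := by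
    conv_rhs => rw [← Real.rpow_one T]
    exact Real.rpow_le_rpow_of_exponent_le (by linarith) (by norm_num)
  simp only [S2_eq]
  set I := Finset.Icc 1 ⌊T^((3:ℝ)/4)⌋₊ with hI
  have hmemI : ∀ m ∈ I, 1 ≤ m ∧ (m:ℝ) ≤ T^((3:ℝ)/4) := by
    intro m hm
    rw [hI, mem_Icc] at hm
    exact ⟨hm.1, (Nat.le_floor_iff (by positivity)).1 hm.2⟩
  have hdI : ∀ m ∈ I, (m.divisors.card:ℝ) ≤ D*T^(ε/8) := by
    intro m hm
    obtain ⟨h1, h2⟩ := hmemI m hm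
    refine (hdiv m (by omega)).trans ?_
    have : (m:ℝ)^(ε/8) ≤ T^(ε/8) := Real.rpow_le_rpow (Nat.cast_nonneg _) (h2.trans hle) (by positivity)
    gcongr
  have hcont : ∀ i n, Continuous (fun x : ℝ => x / (32 * π ^ 4) * Gt M₁ M₂ ℓ₁ ℓ₂ i n x) := by
    intro i n
    exact (continuous_id.div_const _).mul (Gt_cont M₁ M₂ ℓ₁ ℓ₂ i n)
  refine (aux_int_sum _ _ _ _ (fun i _ => continuous_finset_sum _ fun n _ => hcont i n)).trans ?_
  have hone : ∀ i ∈ (Finset.univ : Finset (Fin 2 × Fin 2 × Fin 2)),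
      |∫ x in (T/2)..T, ∑ n ∈ I ×ˢ I ×ˢ I ×ˢ I, x / (32 * π ^ 4) * Gt M₁ M₂ ℓ₁ ℓ₂ i n x|
        ≤ D^4*C*T ^ (2 - 1/8 + ε) := by
    intro i _
    refine (aux_int_sum _ _ _ _ (fun n _ => hcont i n)).trans ?_
    set J := (I ×ˢ I ×ˢ I ×ˢ I).filter (fun n => alphaNI n i ≠ 0) with hJ
    have hz : ∑ n ∈ I ×ˢ I ×ˢ I ×ˢ I, |∫ x in (T/2)..T, x / (32 * π ^ 4) * Gt M₁ M₂ ℓ₁ ℓ₂ i n x| =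
        ∑ n ∈ J, |∫ x in (T/2)..T, x / (32 * π ^ 4) * Gt M₁ M₂ ℓ₁ ℓ₂ i n x| := by
      symm
      refine Finset.sum_subset (filter_subset _ _) ?_
      intro n hn hn'
      have h0 : alphaNI n i = 0 := by
        by_contra h
        exact hn' (mem_filter.2 ⟨hn, h⟩)
      simp [Gt, h0]
    rw [hz]
    have hbd : ∀ n ∈ J, |∫ x in (T/2)..T, x / (32 * π ^ 4) * Gt M₁ M₂ ℓ₁ ℓ₂ i n x| ≤
        D^4*T^(ε/2)*T * wt T 1 (sg i.1) (sg i.2.1) (sg i.2.2) n := by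
      intro n hn
      rw [hJ, mem_filter, mem_product, mem_product, mem_product] at hn
      obtain ⟨⟨m1, m2, m3, m4⟩, ha⟩ := hn
      refine (aux_term M₁ M₂ ℓ₁ ℓ₂ i n T hT ha).trans ?_
      have hw0 : 0 ≤ wt T 1 (sg i.1) (sg i.2.1) (sg i.2.2) n := by
        unfold wt
        exact mul_nonneg (by positivity) (le_min hT0.le (by positivity))
      have hT4 : (T^(ε/8))^4 = T^(ε/2) := by
        rw [← Real.rpow_natCast, ← Real.rpow_mul hT0.le]; congr 1; push_cast; ring
      have d1 := hdI _ m1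
      have d2 := hdI _ m2
      have d3 := hdI _ m3
      have d4 := hdI _ m4
      calc _ ≤ ((D*T^(ε/8))*(D*T^(ε/8))*(D*T^(ε/8))*(D*T^(ε/8))) *
            (T * wt T 1 (sg i.1) (sg i.2.1) (sg i.2.2) n) := by gcongr
        _ = D^4*(T^(ε/8))^4*T * wt T 1 (sg i.1) (sg i.2.1) (sg i.2.2) n := by ring
        _ = _ := by rw [hT4]
    refine (Finset.sum_le_sum hbd).trans ?_
    rw [← Finset.mul_sum]
    have hS := hsum T hT 1 (sg i.1) (sg i.2.1) (sg i.2.2) (Or.inl rfl) (sg_or _) (sg_or _) (sg_or _) J ?_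
    · have hTT : T^(ε/2)*T*T^((7:ℝ)/8+ε/2) = T^(2-1/8+ε) := by
        nth_rewrite 2 [← Real.rpow_one T]
        rw [← Real.rpow_add hT0, ← Real.rpow_add hT0]; congr 1; ring
      calc _ ≤ D^4*T^(ε/2)*T * (C*T^((7:ℝ)/8+ε/2)) := mul_le_mul_of_nonneg_left hS (by positivity)
        _ = D^4*C*(T^(ε/2)*T*T^((7:ℝ)/8+ε/2)) := by ring
        _ = _ := by rw [hTT]
    · intro n hn
      rw [hJ, mem_filter, mem_product, mem_product, mem_product] at hn
      obtain ⟨⟨m1, m2, m3, m4⟩, ha⟩ := hn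
      have m1 := hmemI _ m1
      have m2 := hmemI _ m2
      have m3 := hmemI _ m3
      have m4 := hmemI _ m4
      rw [alphaNI_eq] at ha
      exact ⟨⟨m1.1, m2.1, m3.1, m4.1⟩, ⟨m1.2, m2.2, m3.2, m4.2⟩, ha⟩
  have hs := Finset.sum_le_card_nsmul _ _ _ hone
  rw [nsmul_eq_mul] at hs
  refine hs.trans (le_of_eq ?_)
  simp only [Finset.card_univ, Fintype.card_prod, Fintype.card_fin]
  push_cast
  ring
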